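/- Let D ⊆ ℝ[X₁,…,Xₙ]\{0} be a multiplicatively closed set with 1 ∈ D, let E = D⁻¹ℝ[X₁,…,Xₙ], and let S ⊆ ℝ[X₁,…,Xₙ] be finite with K_S ≠ ∅. Assume there exist p ∈ D and an integer k ≥ 1 such that p ≥ 1 on K_S and k·p − (X₁²+⋯+Xₙ²) ≥ 0 on K_S. Then for every linear functional L : E → ℝ with L(T_S^E) ⊆ [0,∞) there exists a positive Borel measure μ on the closed set 𝒳 = closure(K_S \ ⋃_{d∈D} Z(d)) ⊆ ℝⁿ such that μ(𝒳 ∩ Z(d)) = 0 for every d ∈ D and L(f/d) = ∫_𝒳 f(x)/d(x) dμ(x) for every f ∈ ℝ[X₁,…,Xₙ] and d ∈ D (the integrand being defined μ-almost everywhere). -/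

import Mathlib

open MvPolynomial MeasureTheory

noncomputable section

/-- The Euclidean (weak) topology on a real vector space; for finite-dimensional
spaces this is the usual Euclidean topology. -/
def weakTop (V : Type*) [AddCommGroup V] [Module ℝ V] : TopologicalSpace V :=
  ⨅ L : V →ₗ[ℝ] ℝ, TopologicalSpace.induced L inferInstance

/-- The topology of finitely open sets: `O` is open iff its intersection with every
finite-dimensional subspace `U` is open in the Euclidean topology of `U`. -/
def finTop (E : Type*) [AddCommGroup E] [Module ℝ E] : TopologicalSpace E where
  IsOpen O := ∀ U : Submodule ℝ E, FiniteDimensional ℝ U →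
    @IsOpen _ (weakTop U) ((Subtype.val : U → E) ⁻¹' O)
  isOpen_univ := by
    intro U _
    letI := weakTop U
    rw [Set.preimage_univ]
    exact isOpen_univ
  isOpen_inter := by
    intro s t hs ht U hU
    letI := weakTop U
    rw [Set.preimage_inter]
    exact (hs U hU).inter (ht U hU)
  isOpen_sUnion := by
    intro s hs U hU
    letI := weakTop U
    rw [Set.preimage_sUnion]
    exact isOpen_biUnion fun t ht => hs t ht U hU

/-- The closure of a convex cone in the finest locally convex topology, via the dual
characterization: `x` lies in the closure iff `L x ≥ 0` for every linear functional `L`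
nonnegative on the cone. -/
def dualClosure {E : Type*} [AddCommGroup E] [Module ℝ E] (C : Set E) : Set E :=
  {x | ∀ L : E →ₗ[ℝ] ℝ, (∀ c ∈ C, 0 ≤ L c) → 0 ≤ L x}

/-- The preordering generated by `g 1, …, g m` in a commutative ring: all finite sums
of elements `σ • g₁^ν₁ ⋯ g_m^ν_m` with `σ` a sum of squares and `ν ∈ {0,1}^m`. -/
def genPreordering {E : Type*} [CommRing E] {m : ℕ} (g : Fin m → E) : Set E :=
  {x | ∃ σ : (Fin m → Bool) → E, (∀ ν, IsSumSq (σ ν)) ∧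
    x = ∑ ν : Fin m → Bool, σ ν * ∏ j, (if ν j then g j else 1)}

/-- The basic closed semialgebraic set determined by `g 1, …, g m`. -/
def KS {n m : ℕ} (g : Fin m → MvPolynomial (Fin n) ℝ) : Set (Fin n → ℝ) :=
  {x | ∀ i, 0 ≤ eval x (g i)}

/-- The real zero set of a polynomial. -/
def Zset {n : ℕ} (d : MvPolynomial (Fin n) ℝ) : Set (Fin n → ℝ) :=
  {x | eval x d = 0}

/-- `Pos^E(𝒳)`: elements of the localization having a representation `f/d` with
`f·d ≥ 0 pointwise on 𝒳`. -/
def PosE {n : ℕ} (D : Submonoid (MvPolynomial (Fin n) ℝ)) (X : Set (Fin n → ℝ)) :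
    Set (Localization D) :=
  {R | ∃ (f : MvPolynomial (Fin n) ℝ) (d : D), R = Localization.mk f d ∧
    ∀ x ∈ X, 0 ≤ eval x f * eval x (d : MvPolynomial (Fin n) ℝ)}

/-!
By the Positivstellensatz of Krivine and Stengle, a preordering of `ℝ[X]` contains `-1` as soon as
finitely many of its elements have no common point of nonnegativity. Indeed, a preordering without
`-1` extends to an ordering, whose residue field embeds into an ordered field with the intermediate
value property for polynomials, and over two such fields polynomials with the same coefficients
have matching sign diagrams, so that the inequalities have a real solution.

Let `T = T_S^E`. For `h = 2 p - 1` and `h = (k + 1) p - |X|²` the Positivstellensatz gives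
`s, t ∈ T` with `s h = 1 + t`. It follows that, for a suitable power `v` of `1 / p`, the
homogeneous coordinates `b = (v, X₁ v, …, Xₙ v)` are bounded by real constants modulo `T`; they
range over a cube of `ℝⁿ⁺¹`, and `F(b) ∈ T` for every polynomial `F` positive on it. Consequently,
for each `u ∈ E`, the functional `F ↦ L(u² F(b))` is integration against a measure `ν_u` on the
cube. If `u P(b) = 1`, then `ν₁ = P² ν_u` and `ν_u = P² ν_{u²}`, so that `P ≠ 0` holds almost
everywhere with respect to `ν₁` and `ν_u`, and `∫ F / P² dν₁ = L(u² F(b))`. Every fraction `f / d`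
has the form `u² F(b)`, hence the image `μ` of `ν₁` under `y ↦ (yᵢ / y₀)ᵢ` represents `L`.

Each `Z(d)` is a null set of `μ`, but `D` may be uncountable. As `1 / d ^ (n + 1)` is integrable,
every ball of radius `r` around a zero of `d` has measure `O(r ^ (n + 1))`. Lebesgue measure thus
has infinite density with respect to `μ` on the union of all `Z(d)`, which is therefore a null set.
-/

open scoped Polynomial

/-! ### Orderings of rings and their residue fields -/

section Orderings
universe u
variable {A : Type u} [CommRing A]

/-- The subsemiring `T + aT` generated by a subsemiring `T` and an element `a` with `a² ∈ T`. -/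
def adjoinCone (T : Subsemiring A) (a : A) (ha : a * a ∈ T) : Subsemiring A where
  carrier := {x | ∃ s ∈ T, ∃ t ∈ T, x = s + a * t}
  mul_mem' := by
    rintro _ _ ⟨s, hs, t, ht, rfl⟩ ⟨s', hs', t', ht', rfl⟩
    exact ⟨s * s' + a * a * (t * t'), add_mem (mul_mem hs hs') (mul_mem ha (mul_mem ht ht')),
      s * t' + t * s', add_mem (mul_mem hs ht') (mul_mem ht hs'), by ring⟩
  one_mem' := ⟨1, one_mem _, 0, zero_mem _, by ring⟩
  add_mem' := by
    rintro _ _ ⟨s, hs, t, ht, rfl⟩ ⟨s', hs', t', ht', rfl⟩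
    exact ⟨s + s', add_mem hs hs', t + t', add_mem ht ht', by ring⟩
  zero_mem' := ⟨0, zero_mem _, 0, zero_mem _, by ring⟩

lemma le_adjoinCone {T : Subsemiring A} {a : A} (ha : a * a ∈ T) : T ≤ adjoinCone T a ha :=
  fun x hx => ⟨x, hx, 0, zero_mem _, by ring⟩

lemma mem_adjoinCone_self {T : Subsemiring A} {a : A} (ha : a * a ∈ T) : a ∈ adjoinCone T a ha :=
  ⟨0, zero_mem _, 1, one_mem _, by ring⟩

lemma neg_one_mem_adjoinCone {P : RingPreordering A} (hP : IsMax P) {a : A} (ha : a ∉ P) :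
    -1 ∈ adjoinCone P.toSubsemiring a (P.mul_self_mem a) := by
  by_contra hneg
  let Q : RingPreordering A :=
    { adjoinCone P.toSubsemiring a (P.mul_self_mem a) with
      mem_of_isSquare' := fun hx => le_adjoinCone (P.mul_self_mem a) (P.mem_of_isSquare hx)
      neg_one_notMem' := hneg }
  have hPQ : P ≤ Q := le_adjoinCone (P.mul_self_mem a)
  exact ha (hP hPQ (mem_adjoinCone_self (P.mul_self_mem a)))

lemma hasMemOrNegMem_of_isMax {P : RingPreordering A} (hP : IsMax P) : HasMemOrNegMem P where
  mem_or_neg_mem a := by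
    by_contra! h
    obtain ⟨s, hs, t, ht, e⟩ := neg_one_mem_adjoinCone hP h.1
    obtain ⟨s', hs', t', ht', e'⟩ := neg_one_mem_adjoinCone hP h.2
    refine P.neg_one_notMem ?_
    rw [show (-1 : A) = s + s' + s * s' + a * a * (t * t') by
      linear_combination (1 + s') * e - a * t * e']
    exact add_mem (add_mem (add_mem hs hs') (mul_mem hs hs'))
      (mul_mem (P.mul_self_mem a) (mul_mem ht ht'))

lemma neg_mul_notMem_of_isMax {P : RingPreordering A} (hP : IsMax P) {a b : A} (ha : -a ∉ P)
    (hb : -b ∉ P) : -(a * b) ∉ P := by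
  intro hab
  obtain ⟨s, hs, t, ht, e⟩ := neg_one_mem_adjoinCone hP ha
  obtain ⟨s', hs', t', ht', e'⟩ := neg_one_mem_adjoinCone hP hb
  refine P.neg_one_notMem ?_
  rw [show (-1 : A) = s + s' + s * s' + -(a * b) * (t * t') by
    linear_combination (1 + s') * e + a * t * e']
  exact add_mem (add_mem (add_mem hs hs') (mul_mem hs hs')) (mul_mem hab (mul_mem ht ht'))

lemma isOrdering_of_isMax {P : RingPreordering A} (hP : IsMax P) : P.IsOrdering := by
  have := hasMemOrNegMem_of_isMax hP
  have hprime : P.support.IsPrime := by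
    refine ⟨RingPreordering.support_ne_top P, fun {a b} hab => ?_⟩
    simp only [RingPreordering.mem_support] at hab ⊢
    by_contra! h
    by_cases ha : -a ∈ P
    · have ha' : a ∉ P := fun h' => h.1 h' ha
      by_cases hb : -b ∈ P
      · exact neg_mul_notMem_of_isMax hP (a := -a) (b := -b) (by simpa)
          (by simpa using fun h' => h.2 h' hb) (by simpa using hab.2)
      · exact neg_mul_notMem_of_isMax hP (a := -a) (by simpa) hb (by simpa using hab.1)
    · by_cases hb : -b ∈ P
      · exact neg_mul_notMem_of_isMax hP (b := -b) ha (by simpa using fun h' => h.2 h' hb)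
          (by simpa using hab.1)
      · exact neg_mul_notMem_of_isMax hP ha hb hab.2
  exact { }

theorem exists_isOrdering_ge (P : RingPreordering A) :
    ∃ O : RingPreordering A, P ≤ O ∧ O.IsOrdering := by
  obtain ⟨O, hPO, hO⟩ := zorn_le_nonempty_Ici₀ P (fun c _ hchain y hy => by
    have hdir : DirectedOn (· ≤ ·) (RingPreordering.toSubsemiring '' c) :=
      directedOn_image.2 hchain.directedOn
    have hmem (x : A) : x ∈ sSup (RingPreordering.toSubsemiring '' c) ↔ ∃ Q ∈ c, x ∈ Q := by
      exact (Subsemiring.mem_sSup_of_directedOn (Set.Nonempty.image _ ⟨y, hy⟩) hdir).trans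
        Set.exists_mem_image
    let Q : RingPreordering A :=
      { sSup (RingPreordering.toSubsemiring '' c) with
        mem_of_isSquare' := fun hx => (hmem _).2 ⟨y, hy, y.mem_of_isSquare hx⟩
        neg_one_notMem' := fun h => by
          obtain ⟨Q, _, hQ⟩ := (hmem _).1 h
          exact Q.neg_one_notMem hQ }
    exact ⟨Q, fun Q' hQ' x hx => (hmem x).2 ⟨Q', hQ', hx⟩⟩) P le_rfl
  exact ⟨O, hPO, isOrdering_of_isMax hO⟩

lemma exists_linearOrder_of_ringCone {R : Type*} [CommRing R] [IsDomain R] (C : RingCone R)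
    [HasMemOrNegMem C] :
    ∃ (_ : LinearOrder R) (_ : IsStrictOrderedRing R), ∀ a : R, 0 ≤ a ↔ a ∈ C := by
  classical
  let _ : LinearOrder R := .mkOfAddGroupCone C
  have : IsOrderedRing R := .mkOfCone C
  exact ⟨inferInstance, this.toIsStrictOrderedRing, fun a => by
    change a - 0 ∈ C ↔ a ∈ C
    rw [sub_zero]⟩

/-- The homomorphism from a ring to the residue field at an ordering, the fraction field of the
quotient by the support. -/
def residueMap (P : RingPreordering A) [P.IsOrdering] : A →+* FractionRing (A ⧸ P.support) :=
  (algebraMap _ _).comp (Ideal.Quotient.mk P.support)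

lemma residueMap_eq_zero_iff {P : RingPreordering A} [P.IsOrdering] {a : A} :
    residueMap P a = 0 ↔ a ∈ P.support := by
  simp [residueMap, Ideal.Quotient.eq_zero_iff_mem]

lemma exists_eq_residueMap_div (P : RingPreordering A) [P.IsOrdering]
    (x : FractionRing (A ⧸ P.support)) :
    ∃ a b, residueMap P b ≠ 0 ∧ x = residueMap P a / residueMap P b := by
  obtain ⟨a, b, hb, rfl⟩ := IsFractionRing.div_surjective (A := A ⧸ P.support) x
  obtain ⟨a, rfl⟩ := Ideal.Quotient.mk_surjective a
  obtain ⟨b, rfl⟩ := Ideal.Quotient.mk_surjective b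
  refine ⟨a, b, ?_, rfl⟩
  rw [Ne, residueMap_eq_zero_iff, ← Ideal.Quotient.eq_zero_iff_mem]
  exact nonZeroDivisors.ne_zero hb

/-- The preordering of the residue field at `P` generated by the image of `P`. -/
def residuePreordering (P : RingPreordering A) [P.IsOrdering] :
    RingPreordering (FractionRing (A ⧸ P.support)) :=
  RingPreordering.mk'
    {x | ∃ a ∈ P, ∃ b, residueMap P b ≠ 0 ∧ x = residueMap P a / residueMap P b ^ 2}
    (by
      rintro _ _ ⟨a, ha, b, hb, rfl⟩ ⟨a', ha', b', hb', rfl⟩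
      refine ⟨a * (b' * b') + a' * (b * b), add_mem (mul_mem ha (P.mul_self_mem b'))
        (mul_mem ha' (P.mul_self_mem b)), b * b', by simp [hb, hb'], ?_⟩
      simp only [map_add, map_mul]
      field_simp)
    (by
      rintro _ _ ⟨a, ha, b, hb, rfl⟩ ⟨a', ha', b', hb', rfl⟩
      refine ⟨a * a', mul_mem ha ha', b * b', by simp [hb, hb'], ?_⟩
      simp only [map_mul]
      field_simp)
    (by
      intro x
      obtain ⟨a, b, hb, rfl⟩ := exists_eq_residueMap_div P x
      exact ⟨a * a, P.mul_self_mem a, b, hb, by rw [map_mul, div_mul_div_comm, sq]⟩)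
    (by
      rintro ⟨a, ha, b, hb, h⟩
      have hab : a + b * b ∈ P.support := by
        rw [← residueMap_eq_zero_iff, map_add, map_mul]
        field_simp at h
        linear_combination -h
      have hbb : b * b ∈ P.support :=
        ⟨P.mul_self_mem b, by simpa using add_mem ha (RingPreordering.mem_support.1 hab).2⟩
      exact hb (residueMap_eq_zero_iff.2
        (or_self_iff.1 (Ideal.IsPrime.mem_or_mem inferInstance hbb))))

lemma residueMap_mem_residuePreordering {P : RingPreordering A} [P.IsOrdering] {a : A}
    (ha : a ∈ P) : residueMap P a ∈ residuePreordering P :=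
  ⟨a, ha, 1, by simp, by simp⟩

instance (P : RingPreordering A) [P.IsOrdering] : HasMemOrNegMem (residuePreordering P) where
  mem_or_neg_mem x := by
    obtain ⟨a, b, hb, rfl⟩ := exists_eq_residueMap_div P x
    have key (a : A) (hab : a * b ∈ P) :
        residueMap P a / residueMap P b ∈ residuePreordering P :=
      ⟨a * b, hab, b, hb, by rw [map_mul]; field_simp⟩
    rcases mem_or_neg_mem P (a * b) with h | h
    · exact .inl (key a h)
    · exact .inr (by simpa [neg_div] using key (-a) (by simpa using h))

theorem exists_orderedField_ringHom_nonneg (P : RingPreordering A) :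
    ∃ (F : Type u) (_ : Field F) (_ : LinearOrder F) (_ : IsStrictOrderedRing F) (φ : A →+* F),
      ∀ a ∈ P, 0 ≤ φ a := by
  obtain ⟨O, hPO, hO⟩ := exists_isOrdering_ge P
  let C : RingCone (FractionRing (A ⧸ O.support)) :=
    { (residuePreordering O).toSubsemiring with
      eq_zero_of_mem_of_neg_mem' := fun h h' =>
        (residuePreordering O).eq_zero_of_mem_of_neg_mem h h' }
  have : HasMemOrNegMem C := ⟨mem_or_neg_mem (residuePreordering O)⟩
  obtain ⟨_, _, hC⟩ := exists_linearOrder_of_ringCone C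
  exact ⟨_, inferInstance, _, ‹_›, residueMap O,
    fun a ha => (hC _).2 (residueMap_mem_residuePreordering (hPO ha))⟩

end Orderings

/-! ### Ordered fields with the intermediate value property -/

/-- The intermediate value property for polynomials over an ordered field; it characterizes the
real closed fields. -/
def PolyIVT (R : Type*) [Field R] [LinearOrder R] : Prop :=
  ∀ (f : R[X]) (a b : R), a < b → f.eval a * f.eval b < 0 → ∃ c ∈ Set.Ioo a b, f.eval c = 0

section OrderedRoots
variable {F : Type*} [Field F] [LinearOrder F] [IsStrictOrderedRing F]

/-- The multiplicative monoid of the weighted squares `c g²` with `c ≥ 0` in the polynomial ring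
over an ordered field. -/
def weightedSquares (F : Type*) [Field F] [LinearOrder F] [IsStrictOrderedRing F] :
    Submonoid F[X] where
  carrier := {s | ∃ (c : F) (g : F[X]), 0 ≤ c ∧ s = Polynomial.C c * g ^ 2}
  mul_mem' := by
    rintro _ _ ⟨c, g, hc, rfl⟩ ⟨c', g', hc', rfl⟩
    exact ⟨c * c', g * g', mul_nonneg hc hc', by rw [Polynomial.C_mul]; ring⟩
  one_mem' := ⟨1, 1, zero_le_one, by simp⟩

/-- The sums of weighted squares: the preordering of the polynomial ring over an ordered field
generated by the nonnegative constants. -/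
def weightedSumSq (F : Type*) [Field F] [LinearOrder F] [IsStrictOrderedRing F] :
    Subsemiring F[X] :=
  (weightedSquares F).subsemiringClosure

lemma C_mul_sq_mem_weightedSumSq {c : F} (hc : 0 ≤ c) (g : F[X]) :
    Polynomial.C c * g ^ 2 ∈ weightedSumSq F :=
  AddSubmonoid.subset_closure ⟨c, g, hc, rfl⟩

lemma C_mem_weightedSumSq {c : F} (hc : 0 ≤ c) : Polynomial.C c ∈ weightedSumSq F := by
  simpa using C_mul_sq_mem_weightedSumSq hc 1

@[elab_as_elim]
lemma weightedSumSq_induction {motive : (s : F[X]) → s ∈ weightedSumSq F → Prop}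
    (C_mul_sq : ∀ c g hc, motive (Polynomial.C c * g ^ 2) (C_mul_sq_mem_weightedSumSq hc g))
    (zero : motive 0 (zero_mem _))
    (add : ∀ s t hs ht, motive s hs → motive t ht → motive (s + t) (add_mem hs ht))
    {s : F[X]} (hs : s ∈ weightedSumSq F) : motive s hs := by
  induction hs using AddSubmonoid.closure_induction with
  | mem x hx =>
    obtain ⟨c, g, hc, rfl⟩ := hx
    exact C_mul_sq c g hc
  | zero => exact zero
  | add x y hx hy ihx ihy => exact add x y hx hy ihx ihy

lemma map_nonneg_of_mem_weightedSumSq {R : Type*} [CommRing R] [LinearOrder R]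
    [IsStrictOrderedRing R] {ψ : F[X] →+* R} (hψ : ∀ c, 0 ≤ c → 0 ≤ ψ (Polynomial.C c))
    {s : F[X]} (hs : s ∈ weightedSumSq F) : 0 ≤ ψ s := by
  induction hs using weightedSumSq_induction with
  | C_mul_sq c g hc =>
    rw [map_mul, map_pow]
    exact mul_nonneg (hψ c hc) (sq_nonneg _)
  | zero => rw [map_zero]
  | add s t _ _ hs ht =>
    rw [map_add]
    exact add_nonneg hs ht

lemma exists_mem_weightedSumSq_natDegree_le {f s : F[X]} (hf : 0 < f.natDegree)
    (hs : s ∈ weightedSumSq F) :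
    ∃ s' ∈ weightedSumSq F, f ∣ s - s' ∧ s'.natDegree ≤ 2 * (f.natDegree - 1) := by
  induction hs using weightedSumSq_induction with
  | C_mul_sq c g hc =>
    refine ⟨Polynomial.C c * (g % f) ^ 2, C_mul_sq_mem_weightedSumSq hc _, ?_, ?_⟩
    · have hmod : f ∣ g - g % f := ⟨g / f, sub_eq_of_eq_add (EuclideanDomain.div_add_mod g f).symm⟩
      rw [← mul_sub, sq_sub_sq]
      exact (hmod.mul_left _).mul_left _
    · have hmod : (g % f).natDegree < f.natDegree := Polynomial.natDegree_mod_lt g hf.ne'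
      calc _ ≤ ((g % f) ^ 2).natDegree := Polynomial.natDegree_C_mul_le _ _
        _ ≤ 2 * (g % f).natDegree := Polynomial.natDegree_pow_le
        _ ≤ _ := by omega
  | zero => exact ⟨0, zero_mem _, by simp, by simp⟩
  | add s t _ _ hs ht =>
    obtain ⟨s', hs', hfs, hdegs⟩ := hs
    obtain ⟨t', ht', hft, hdegt⟩ := ht
    refine ⟨s' + t', add_mem hs' ht', ?_, Polynomial.natDegree_add_le_of_degree_le hdegs hdegt⟩
    rw [add_sub_add_comm]
    exact dvd_add hfs hft

lemma natDegree_pos_of_eval_mul_eval_neg {f : F[X]} {a b : F} (h : f.eval a * f.eval b < 0) :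
    0 < f.natDegree := by
  by_contra! hdeg
  rw [Polynomial.eq_C_of_natDegree_le_zero hdeg, Polynomial.eval_C, Polynomial.eval_C] at h
  exact h.not_ge (mul_self_nonneg _)

lemma exists_cofactor_eval_mul_eval_neg {f s : F[X]} {a b : F} (hab : f.eval a * f.eval b < 0)
    (hs : s ∈ weightedSumSq F) (hfs : f ∣ 1 + s) :
    ∃ h s', s' ∈ weightedSumSq F ∧ 1 + s' = f * h ∧ h.natDegree < f.natDegree ∧
      h.eval a * h.eval b < 0 := by
  have hdeg := natDegree_pos_of_eval_mul_eval_neg hab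
  obtain ⟨s', hs', hss', hdeg'⟩ := exists_mem_weightedSumSq_natDegree_le hdeg hs
  obtain ⟨h, hh⟩ : f ∣ 1 + s' := by
    convert dvd_sub hfs hss' using 1
    ring
  have hpos (c : F) : 0 < f.eval c * h.eval c := by
    rw [← Polynomial.eval_mul, ← hh, Polynomial.eval_add, Polynomial.eval_one]
    have : 0 ≤ Polynomial.evalRingHom c s' :=
      map_nonneg_of_mem_weightedSumSq (fun _ => by simp) hs'
    exact add_pos_of_pos_of_nonneg one_pos this
  refine ⟨h, s', hs', hh, ?_, ?_⟩
  · have hle : (f * h).natDegree ≤ 2 * (f.natDegree - 1) :=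
      hh ▸ Polynomial.natDegree_add_le_of_degree_le (by simp) hdeg'
    rw [Polynomial.natDegree_mul (by rintro rfl; simp at hab)
      (by rintro rfl; simpa using hpos 0)] at hle
    omega
  · refine neg_of_mul_pos_right ?_ hab.le
    rw [mul_mul_mul_comm]
    exact mul_pos (hpos a) (hpos b)

end OrderedRoots

section OrderedExtension
universe u
variable {F : Type u} [Field F] [LinearOrder F] [IsStrictOrderedRing F]

/-- If the order did not extend, `-1` would be a sum of weighted squares modulo `f`; the cofactor
`h` in an identity `1 + s = f h` of least degree changes sign as well, but `1 + s` is positive at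
an adjoined root of `h`. -/
theorem exists_ordered_root {f : F[X]} {a b : F} (hab : f.eval a * f.eval b < 0) :
    ∃ (F' : Type u) (_ : Field F') (_ : LinearOrder F') (_ : IsStrictOrderedRing F')
      (ψ : F[X] →+* F'), ψ f = 0 ∧ ∀ c, 0 ≤ c → 0 ≤ ψ (Polynomial.C c) := by
  induction hN : f.natDegree using Nat.strong_induction_on generalizing f with | _ N ih
  let T : RingPreordering (AdjoinRoot f) :=
    { (weightedSumSq F).map (AdjoinRoot.mk f) with
      mem_of_isSquare' := by
        rintro _ ⟨x, rfl⟩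
        obtain ⟨g, rfl⟩ := AdjoinRoot.mk_surjective x
        refine ⟨g * g, ?_, by simp⟩
        simpa [sq] using C_mul_sq_mem_weightedSumSq zero_le_one g
      neg_one_notMem' := by
        rintro ⟨s, hs, hfs⟩
        obtain ⟨h, s', hs', hh, hdeg, hsign⟩ := exists_cofactor_eval_mul_eval_neg hab hs
          (AdjoinRoot.mk_eq_zero.1 (by simp [hfs]))
        obtain ⟨F', _, _, _, ψ, hψh, hψ⟩ := ih _ (hN ▸ hdeg) hsign rfl
        have hpos : 0 < ψ (1 + s') := by
          rw [map_add, map_one]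
          exact add_pos_of_pos_of_nonneg one_pos (map_nonneg_of_mem_weightedSumSq hψ hs')
        rw [hh, map_mul, hψh, mul_zero] at hpos
        exact hpos.false }
  obtain ⟨F', _, _, _, φ, hφ⟩ := exists_orderedField_ringHom_nonneg T
  exact ⟨F', _, _, ‹_›, φ.comp (AdjoinRoot.mk f), by simp,
    fun c hc => hφ _ ⟨_, C_mem_weightedSumSq hc, rfl⟩⟩

end OrderedExtension

section SubfieldCones
variable {Ω : Type*} [Field Ω]

/-- `P` is the nonnegative cone of a field ordering on the subfield `P ∪ -P` of `Ω`. -/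
structure IsSubfieldCone (P : Subsemiring Ω) : Prop where
  eq_zero_of_mem_of_neg_mem : ∀ x ∈ P, -x ∈ P → x = 0
  sub_mem_or_sub_mem : ∀ x ∈ P, ∀ y ∈ P, x - y ∈ P ∨ y - x ∈ P
  inv_mem : ∀ x ∈ P, x⁻¹ ∈ P

namespace IsSubfieldCone

lemma map_nonneg {K : Type*} [Field K] [LinearOrder K] [IsStrictOrderedRing K] (j : K →+* Ω) :
    IsSubfieldCone ((Subsemiring.nonneg K).map j) where
  eq_zero_of_mem_of_neg_mem := by
    rintro _ ⟨c, hc, rfl⟩ ⟨c', hc', h⟩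
    rw [← map_neg] at h
    have hc'c : c' = -c := j.injective h
    rw [le_antisymm (neg_nonneg.1 (hc'c ▸ hc')) hc, map_zero]
  sub_mem_or_sub_mem := by
    rintro _ ⟨c, _, rfl⟩ _ ⟨c', _, rfl⟩
    rcases le_total c c' with h | h
    · exact .inr ⟨c' - c, sub_nonneg.2 h, map_sub j c' c⟩
    · exact .inl ⟨c - c', sub_nonneg.2 h, map_sub j c c'⟩
  inv_mem := by
    rintro _ ⟨c, hc, rfl⟩
    exact ⟨c⁻¹, inv_nonneg.2 hc, map_inv₀ j c⟩

lemma sSup_of_isChain {c : Set (Subsemiring Ω)} (hc : ∀ P ∈ c, IsSubfieldCone P)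
    (hchain : IsChain (· ≤ ·) c) (hne : c.Nonempty) : IsSubfieldCone (sSup c) := by
  have hmem (x : Ω) : x ∈ sSup c ↔ ∃ P ∈ c, x ∈ P :=
    Subsemiring.mem_sSup_of_directedOn hne hchain.directedOn
  have hmem₂ {x y : Ω} (hx : x ∈ sSup c) (hy : y ∈ sSup c) : ∃ P ∈ c, x ∈ P ∧ y ∈ P := by
    obtain ⟨P, hP, hx⟩ := (hmem x).1 hx
    obtain ⟨Q, hQ, hy⟩ := (hmem y).1 hy
    rcases hchain.total hP hQ with h | h
    · exact ⟨Q, hQ, h hx, hy⟩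
    · exact ⟨P, hP, hx, h hy⟩
  refine ⟨fun x hx hx' => ?_, fun x hx y hy => ?_, fun x hx => ?_⟩
  · obtain ⟨P, hP, hx, hx'⟩ := hmem₂ hx hx'
    exact (hc P hP).eq_zero_of_mem_of_neg_mem x hx hx'
  · obtain ⟨P, hP, hx, hy⟩ := hmem₂ hx hy
    exact ((hc P hP).sub_mem_or_sub_mem x hx y hy).imp (le_sSup hP ·) (le_sSup hP ·)
  · obtain ⟨P, hP, hx⟩ := (hmem x).1 hx
    exact le_sSup hP ((hc P hP).inv_mem x hx)

lemma exists_maximal_ge {P : Subsemiring Ω} (hP : IsSubfieldCone P) :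
    ∃ Q, P ≤ Q ∧ Maximal IsSubfieldCone Q :=
  zorn_le_nonempty₀ {P | IsSubfieldCone P} (fun _ hc hchain Q hQ =>
    ⟨_, sSup_of_isChain (fun _ h => hc h) hchain ⟨Q, hQ⟩, fun _ => le_sSup⟩) P hP

/-- The subfield `P ∪ -P` ordered by a cone `P`. -/
def subfield {P : Subsemiring Ω} (hP : IsSubfieldCone P) : Subfield Ω where
  carrier := {x | x ∈ P ∨ -x ∈ P}
  mul_mem' := by
    rintro x y (hx | hx) (hy | hy)
    · exact .inl (mul_mem hx hy)
    · exact .inr (by simpa using mul_mem hx hy)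
    · exact .inr (by simpa using mul_mem hx hy)
    · exact .inl (by simpa using mul_mem hx hy)
  one_mem' := .inl (one_mem _)
  add_mem' := by
    rintro x y (hx | hx) (hy | hy)
    · exact .inl (add_mem hx hy)
    · simpa [add_comm, sub_eq_add_neg] using hP.sub_mem_or_sub_mem x hx (-y) hy
    · simpa [add_comm, sub_eq_add_neg] using hP.sub_mem_or_sub_mem y hy (-x) hx
    · exact .inr (by rw [neg_add]; exact add_mem hx hy)
  zero_mem' := .inl (zero_mem _)
  neg_mem' := by
    rintro x (hx | hx)
    · exact .inr (by simpa using hx)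
    · exact .inl hx
  inv_mem' := by
    rintro x (hx | hx)
    · exact .inl (hP.inv_mem x hx)
    · exact .inr (by simpa using hP.inv_mem _ hx)

lemma exists_linearOrder_subfield {P : Subsemiring Ω} (hP : IsSubfieldCone P) :
    ∃ (_ : LinearOrder hP.subfield) (_ : IsStrictOrderedRing hP.subfield),
      (Subsemiring.nonneg hP.subfield).map hP.subfield.subtype = P := by
  let C : RingCone hP.subfield :=
    { P.comap hP.subfield.subtype with
      eq_zero_of_mem_of_neg_mem' := fun h h' =>
        Subtype.ext (hP.eq_zero_of_mem_of_neg_mem _ h h') }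
  have : HasMemOrNegMem C := ⟨fun x => x.2⟩
  obtain ⟨_, _, hC⟩ := exists_linearOrder_of_ringCone C
  refine ⟨_, ‹_›, Subsemiring.ext fun x => ⟨?_, fun hx => ⟨⟨x, .inl hx⟩, (hC _).2 hx, rfl⟩⟩⟩
  rintro ⟨y, hy, rfl⟩
  exact (hC y).1 hy

end IsSubfieldCone

lemma exists_root_of_maximal_isSubfieldCone {K : Type*} [Field K] [LinearOrder K]
    [IsStrictOrderedRing K] [IsAlgClosed Ω] (j : K →+* Ω)
    (hmax : Maximal IsSubfieldCone ((Subsemiring.nonneg K).map j)) {f : K[X]} {a b : K}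
    (hab : f.eval a * f.eval b < 0) : ∃ c, f.eval c = 0 := by
  obtain ⟨F', _, _, _, ψ, hψf, hψ⟩ := exists_ordered_root hab
  let _ : Algebra K Ω := j.toAlgebra
  let _ : Algebra K F' := (ψ.comp Polynomial.C).toAlgebra
  let ψK : K[X] →ₐ[K] F' := { ψ with commutes' := fun _ => rfl }
  have hroot : Polynomial.aeval (ψ Polynomial.X) f = 0 :=
    (Polynomial.aeval_algHom_apply ψK Polynomial.X f).trans (by rwa [Polynomial.aeval_X_left_apply])
  have hf : f ≠ 0 := by rintro rfl; simp at hab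
  let L := algebraicClosure K F'
  let x : L := ⟨ψ Polynomial.X, mem_algebraicClosure_iff.2 ⟨f, hf, hroot⟩⟩
  let i : L →ₐ[K] Ω := IsAlgClosed.lift
  have hle : (Subsemiring.nonneg K).map j ≤ (Subsemiring.nonneg L).map (i : L →+* Ω) := by
    rintro _ ⟨c, hc, rfl⟩
    exact ⟨algebraMap K L c, hψ c hc, i.commutes c⟩
  have hge := hmax.2 (IsSubfieldCone.map_nonneg (i : L →+* Ω)) hle
  obtain ⟨c, hc⟩ : ∃ c, j c = i x := by
    rcases le_total 0 x with h | h
    · obtain ⟨c, -, hc⟩ := hge ⟨x, h, rfl⟩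
      exact ⟨c, hc⟩
    · obtain ⟨c, -, hc⟩ := hge ⟨-x, neg_nonneg.2 h, rfl⟩
      exact ⟨-c, by simpa [neg_eq_iff_eq_neg] using hc⟩
  refine ⟨c, j.injective ?_⟩
  have hx : Polynomial.aeval x f = 0 :=
    Subtype.ext ((Polynomial.aeval_algHom_apply L.val x f).symm.trans hroot)
  calc j (f.eval c) = Polynomial.aeval (j c) f :=
        (Polynomial.aeval_algebraMap_apply_eq_algebraMap_eval c f).symm
    _ = i (Polynomial.aeval x f) := by rw [hc, Polynomial.aeval_algHom_apply]
    _ = j 0 := by rw [hx, map_zero, map_zero]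

end SubfieldCones

lemma polyIVT_of_exists_root {R : Type*} [Field R] [LinearOrder R] [IsStrictOrderedRing R]
    (h : ∀ (f : R[X]) (a b : R), f.eval a * f.eval b < 0 → ∃ c, f.eval c = 0) : PolyIVT R := by
  intro f a b hab hf
  induction hN : f.natDegree using Nat.strong_induction_on generalizing f with | _ N ih
  obtain ⟨c, hc⟩ := h f a b hf
  obtain ⟨g, rfl⟩ := Polynomial.dvd_iff_isRoot.2 hc
  have hg : g ≠ 0 := by rintro rfl; simp at hf
  simp only [Polynomial.eval_mul, Polynomial.eval_sub, Polynomial.eval_X, Polynomial.eval_C,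
    mul_mul_mul_comm] at hf
  rcases mul_neg_iff.1 hf with ⟨-, hneg⟩ | ⟨hneg, -⟩
  · rw [Polynomial.natDegree_mul (Polynomial.X_sub_C_ne_zero c) hg,
      Polynomial.natDegree_X_sub_C] at hN
    obtain ⟨d, hd, hd0⟩ := ih _ (by omega) g hneg rfl
    exact ⟨d, hd, by rw [Polynomial.eval_mul, hd0, mul_zero]⟩
  · refine ⟨c, ?_, hc⟩
    rcases mul_neg_iff.1 hneg with ⟨h₁, h₂⟩ | ⟨h₁, h₂⟩
    · linarith
    · exact ⟨sub_neg.1 h₁, sub_pos.1 h₂⟩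

universe u in
theorem exists_polyIVT_extension (F : Type u) [Field F] [LinearOrder F] [IsStrictOrderedRing F] :
    ∃ (R : Type u) (_ : Field R) (_ : LinearOrder R) (_ : IsStrictOrderedRing R) (φ : F →+* R),
      (∀ c, 0 ≤ c → 0 ≤ φ c) ∧ PolyIVT R := by
  let ι := algebraMap F (AlgebraicClosure F)
  obtain ⟨P, hFP, hP⟩ := (IsSubfieldCone.map_nonneg ι).exists_maximal_ge
  obtain ⟨_, _, hcone⟩ := hP.1.exists_linearOrder_subfield
  have hmem (c : F) : ι c ∈ hP.1.subfield := by
    rcases le_total 0 c with h | h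
    · exact .inl (hFP ⟨c, h, rfl⟩)
    · exact .inr (hFP ⟨-c, neg_nonneg.2 h, map_neg ι c⟩)
  refine ⟨hP.1.subfield, _, _, ‹_›, ι.codRestrict _ hmem, fun c hc => ?_,
    polyIVT_of_exists_root fun f a b hab =>
      exists_root_of_maximal_isSubfieldCone hP.1.subfield.subtype (hcone.symm ▸ hP) hab⟩
  have hcP : ι c ∈ P := hFP ⟨c, hc, rfl⟩
  rw [← hcone] at hcP
  obtain ⟨y, hy, hyc⟩ := hcP
  rwa [show ι.codRestrict _ hmem c = y from Subtype.ext hyc.symm]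

/-! ### The mean value theorem for polynomials -/

lemma exists_eq_pow_mul_pow_mul {K : Type*} [Field K] {f : K[X]} (hf : f ≠ 0) {a b : K}
    (hab : a ≠ b) (ha : f.eval a = 0) (hb : f.eval b = 0) :
    ∃ (m l : ℕ) (h : K[X]), h.eval a ≠ 0 ∧ h.eval b ≠ 0 ∧
      f = (Polynomial.X - Polynomial.C a) ^ (m + 1) *
        ((Polynomial.X - Polynomial.C b) ^ (l + 1) * h) := by
  obtain ⟨g, hg, hga⟩ := Polynomial.exists_eq_pow_rootMultiplicity_mul_and_not_dvd f hf a
  have hg0 : g ≠ 0 := by rintro rfl; simp at hga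
  obtain ⟨h, hh, hhb⟩ := Polynomial.exists_eq_pow_rootMultiplicity_mul_and_not_dvd g hg0 b
  have hgb : g.eval b = 0 := by
    rw [hg, Polynomial.eval_mul] at hb
    simpa [sub_eq_zero, hab.symm] using hb
  obtain ⟨m, hm⟩ := Nat.exists_eq_add_one.2 ((Polynomial.rootMultiplicity_pos hf).2 ha)
  obtain ⟨l, hl⟩ := Nat.exists_eq_add_one.2 ((Polynomial.rootMultiplicity_pos hg0).2 hgb)
  refine ⟨m, l, h, fun h0 => hga ?_, fun h0 => hhb (Polynomial.dvd_iff_isRoot.2 h0), ?_⟩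
  · rw [hh]
    exact (Polynomial.dvd_iff_isRoot.2 h0).mul_left _
  · rw [← hm, ← hl, ← hh, ← hg]

namespace PolyIVT
variable {R : Type*} [Field R] [LinearOrder R] [IsStrictOrderedRing R]

/-- If `f = (X - a) ^ (m + 1) * (X - b) ^ (l + 1) * h` and `h` has no zero in `[a, b]`, then `f'` is
`(X - a) ^ m * (X - b) ^ l` times a polynomial taking opposite signs at `a` and `b`. -/
lemma exists_derivative_eq_zero_of_consecutive (hR : PolyIVT R) {f : R[X]} (hf : f ≠ 0) {a b : R}
    (hab : a < b) (ha : f.eval a = 0) (hb : f.eval b = 0)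
    (hne : ∀ c ∈ Set.Ioo a b, f.eval c ≠ 0) :
    ∃ c ∈ Set.Ioo a b, f.derivative.eval c = 0 := by
  obtain ⟨m, l, h, hha, hhb, rfl⟩ := exists_eq_pow_mul_pow_mul hf hab.ne ha hb
  have hpos : 0 < h.eval a * h.eval b := by
    refine (mul_ne_zero hha hhb).lt_or_gt.resolve_left fun hneg => ?_
    obtain ⟨c, hc, hc0⟩ := hR h a b hab hneg
    exact hne c hc (by simp [hc0])
  let q : R[X] := (m + 1 : R) • ((Polynomial.X - Polynomial.C b) * h) +
    (l + 1 : R) • ((Polynomial.X - Polynomial.C a) * h) +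
    (Polynomial.X - Polynomial.C a) * (Polynomial.X - Polynomial.C b) * h.derivative
  have hq : q.eval a * q.eval b < 0 := by
    have hqab : q.eval a * q.eval b =
        -((m + 1) * (l + 1) * (b - a) ^ 2 * (h.eval a * h.eval b)) := by
      simp only [q, Polynomial.eval_add, Polynomial.eval_smul, Polynomial.eval_mul,
        Polynomial.eval_sub, Polynomial.eval_X, Polynomial.eval_C, smul_eq_mul]
      ring
    have : 0 < b - a := sub_pos.2 hab
    rw [hqab, neg_lt_zero]
    positivity
  obtain ⟨c, hc, hc0⟩ := hR q a b hab hq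
  refine ⟨c, hc, ?_⟩
  calc Polynomial.eval c (Polynomial.derivative _)
      = (c - a) ^ m * (c - b) ^ l * q.eval c := by
        simp [q, Polynomial.derivative_pow]
        ring
    _ = 0 := by rw [hc0, mul_zero]

theorem exists_derivative_eq_zero (hR : PolyIVT R) (f : R[X]) {a b : R} (hab : a < b)
    (ha : f.eval a = 0) (hb : f.eval b = 0) : ∃ c ∈ Set.Ioo a b, f.derivative.eval c = 0 := by
  classical
  rcases eq_or_ne f 0 with rfl | hf
  · obtain ⟨c, hac, hcb⟩ := exists_between hab
    exact ⟨c, ⟨hac, hcb⟩, by simp⟩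
  obtain ⟨b', hb', hmin⟩ := (f.roots.toFinset.filter (a < ·)).exists_min_image id
    ⟨b, by simp [hf, hb, hab]⟩
  simp only [Finset.mem_filter, Multiset.mem_toFinset, Polynomial.mem_roots hf, id,
    Polynomial.IsRoot.def] at hb' hmin
  obtain ⟨c, hc, hc0⟩ := hR.exists_derivative_eq_zero_of_consecutive hf hb'.2 ha hb'.1
    fun c hc hc0 => (hmin c ⟨hc0, hc.1⟩).not_gt hc.2
  exact ⟨c, ⟨hc.1, hc.2.trans_le (hmin b ⟨hb, hab⟩)⟩, hc0⟩

theorem exists_eval_sub_eval_eq_derivative (hR : PolyIVT R) (f : R[X]) {a b : R} (hab : a < b) :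
    ∃ c ∈ Set.Ioo a b, f.eval b - f.eval a = f.derivative.eval c * (b - a) := by
  let t := (f.eval b - f.eval a) / (b - a)
  have ht : t * (b - a) = f.eval b - f.eval a := div_mul_cancel₀ _ (sub_pos.2 hab).ne'
  let g := f - Polynomial.C t * (Polynomial.X - Polynomial.C a) - Polynomial.C (f.eval a)
  obtain ⟨c, hc, hc0⟩ := hR.exists_derivative_eq_zero g hab (by simp [g]) (by simp [g, ht])
  have hct : f.derivative.eval c = t := by simpa [g, sub_eq_zero] using hc0
  exact ⟨c, hc, by rw [hct, ht]⟩

end PolyIVT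

/-! ### Comparing the signs of polynomials over two fields -/

section Monotone

variable {R : Type*} [Field R] [LinearOrder R] [IsStrictOrderedRing R]

lemma PolyIVT.sign_eval_sub_eval (hR : PolyIVT R) {f : R[X]} {a b : R} {s : SignType}
    (hs : ∀ c ∈ Set.Ioo a b, SignType.sign (f.derivative.eval c) = s) {x y : R}
    (hx : x ∈ Set.Icc a b) (hy : y ∈ Set.Icc a b) :
    SignType.sign (f.eval x - f.eval y) = s * SignType.sign (x - y) := by
  rcases lt_trichotomy x y with hxy | rfl | hxy
  · obtain ⟨c, hc, hfc⟩ := hR.exists_eval_sub_eval_eq_derivative f hxy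
    rw [← neg_sub, hfc, ← mul_neg, neg_sub, sign_mul,
      hs c ⟨hx.1.trans_lt hc.1, hc.2.trans_le hy.2⟩]
  · simp
  · obtain ⟨c, hc, hfc⟩ := hR.exists_eval_sub_eval_eq_derivative f hxy
    rw [hfc, sign_mul, hs c ⟨hy.1.trans_lt hc.1, hc.2.trans_le hx.2⟩]

lemma PolyIVT.sign_eval_eq_of_forall_ne_zero (hR : PolyIVT R) {f : R[X]} {a b : R} (hab : a ≤ b)
    (hf : ∀ c ∈ Set.Icc a b, f.eval c ≠ 0) :
    SignType.sign (f.eval a) = SignType.sign (f.eval b) := by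
  have ha := hf a (Set.left_mem_Icc.2 hab)
  have hb := hf b (Set.right_mem_Icc.2 hab)
  have hpos : 0 < f.eval a * f.eval b := by
    refine (mul_ne_zero ha hb).lt_or_gt.resolve_left fun hneg => ?_
    have hab' : a < b := hab.lt_of_ne (by rintro rfl; exact (mul_self_nonneg _).not_gt hneg)
    obtain ⟨c, hc, hc0⟩ := hR f a b hab' hneg
    exact hf c (Set.Ioo_subset_Icc_self hc) hc0
  rcases mul_pos_iff.1 hpos with ⟨h₁, h₂⟩ | ⟨h₁, h₂⟩ <;> simp [h₁, h₂]

end Monotone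

section SamePosition

variable {R R' : Type*} [LinearOrder R] [LinearOrder R'] {M : Set (R × R')}

/-- `α` and `α'` have the same position relative to the pairs in `M`: they compare in the same way
with the two coordinates of each pair. -/
def SamePos (M : Set (R × R')) (α : R) (α' : R') : Prop :=
  ∀ p ∈ M, cmp α p.1 = cmp α' p.2

namespace SamePos

variable {α : R} {α' : R'} {p : R × R'}

lemma swap (h : SamePos M α α') : SamePos (Prod.swap ⁻¹' M) α' α :=
  fun p hp => (h p.swap hp).symm

lemma mono {N : Set (R × R')} (h : SamePos M α α') (hNM : N ⊆ M) : SamePos N α α' :=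
  fun p hp => h p (hNM hp)

lemma lt_iff (h : SamePos M α α') (hp : p ∈ M) : α < p.1 ↔ α' < p.2 :=
  lt_iff_lt_of_cmp_eq_cmp (h p hp)

lemma gt_iff (h : SamePos M α α') (hp : p ∈ M) : p.1 < α ↔ p.2 < α' :=
  lt_iff_lt_of_cmp_eq_cmp (cmp_eq_cmp_symm.1 (h p hp))

lemma eq_iff (h : SamePos M α α') (hp : p ∈ M) : α = p.1 ↔ α' = p.2 :=
  eq_iff_eq_of_cmp_eq_cmp (h p hp)

lemma mem_Ioo_iff {q : R × R'} (h : SamePos M α α') (hp : p ∈ M) (hq : q ∈ M) :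
    α ∈ Set.Ioo p.1 q.1 ↔ α' ∈ Set.Ioo p.2 q.2 :=
  and_congr (h.gt_iff hp) (h.lt_iff hq)

lemma mem_Icc_iff {q : R × R'} (h : SamePos M α α') (hp : p ∈ M) (hq : q ∈ M) :
    α ∈ Set.Icc p.1 q.1 ↔ α' ∈ Set.Icc p.2 q.2 := by
  simp only [Set.mem_Icc, ← not_lt]
  exact and_congr (h.lt_iff hp).not (h.gt_iff hq).not

end SamePos

/-- `p` and `q` are neighbouring pairs of `M`, ordered by the first coordinate. -/
structure IsCell (M : Set (R × R')) (p q : R × R') : Prop where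
  left_mem : p ∈ M
  right_mem : q ∈ M
  lt : p.1 < q.1
  le_or_le : ∀ r ∈ M, r.1 ≤ p.1 ∨ q.1 ≤ r.1

omit [LinearOrder R'] in
lemma exists_mem_or_exists_isCell (hM : M.Finite) {l u : R × R'} (hl : l ∈ M) (hu : u ∈ M) {α : R}
    (hα : α ∈ Set.Icc l.1 u.1) :
    (∃ p ∈ M, p.1 = α) ∨ ∃ p q, IsCell M p q ∧ α ∈ Set.Ioo p.1 q.1 := by
  by_cases h : ∃ p ∈ M, p.1 = α
  · exact Or.inl h
  push Not at h
  obtain ⟨p, ⟨hpM, hpα⟩, hp⟩ := Set.exists_max_image {r ∈ M | r.1 < α} Prod.fst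
    (hM.subset (Set.sep_subset _ _)) ⟨l, hl, hα.1.lt_of_ne (h l hl)⟩
  obtain ⟨q, ⟨hqM, hqα⟩, hq⟩ := Set.exists_min_image {r ∈ M | α < r.1} Prod.fst
    (hM.subset (Set.sep_subset _ _)) ⟨u, hu, hα.2.lt_of_ne (h u hu).symm⟩
  refine Or.inr ⟨p, q, ⟨hpM, hqM, hpα.trans hqα, fun r hr => ?_⟩, hpα, hqα⟩
  exact (h r hr).lt_or_gt.imp (fun h => hp r ⟨hr, h⟩) fun h => hq r ⟨hr, h⟩

namespace IsCell

variable {p q : R × R'} {α : R} {α' : R'}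

lemma cmp_snd_eq (h : IsCell M p q) (hM : ∀ r ∈ M, SamePos M r.1 r.2) {r : R × R'} (hr : r ∈ M)
    (hα : α ∈ Set.Ioo p.1 q.1) (hα' : α' ∈ Set.Ioo p.2 q.2) : cmp α r.1 = cmp α' r.2 := by
  rcases h.le_or_le r hr with hrp | hqr
  · have hrp' : r.2 ≤ p.2 := not_lt.1 ((hM r hr).gt_iff h.left_mem |>.not.1 hrp.not_gt)
    rw [(hrp.trans_lt hα.1).cmp_eq_gt, (hrp'.trans_lt hα'.1).cmp_eq_gt]
  · have hqr' : q.2 ≤ r.2 := not_lt.1 ((hM r hr).lt_iff h.right_mem |>.not.1 hqr.not_gt)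
    rw [(hα.2.trans_le hqr).cmp_eq_lt, (hα'.2.trans_le hqr').cmp_eq_lt]

lemma samePos (h : IsCell M p q) (hM : ∀ r ∈ M, SamePos M r.1 r.2) (hα : α ∈ Set.Ioo p.1 q.1)
    (hα' : α' ∈ Set.Ioo p.2 q.2) : SamePos M α α' :=
  fun _ hr => h.cmp_snd_eq hM hr hα hα'

lemma lt_snd (h : IsCell M p q) (hM : ∀ r ∈ M, SamePos M r.1 r.2) : p.2 < q.2 :=
  ((hM p h.left_mem).lt_iff h.right_mem).1 h.lt

end IsCell

lemma exists_samePos [DenselyOrdered R'] (hM : M.Finite) (hMM : ∀ r ∈ M, SamePos M r.1 r.2)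
    {l u : R × R'} (hl : l ∈ M) (hu : u ∈ M) {α : R} (hα : α ∈ Set.Icc l.1 u.1) :
    ∃ α', SamePos M α α' := by
  rcases exists_mem_or_exists_isCell hM hl hu hα with ⟨p, hp, rfl⟩ | ⟨p, q, hpq, hα⟩
  · exact ⟨p.2, hMM p hp⟩
  · obtain ⟨α', hα'⟩ := exists_between (hpq.lt_snd hMM)
    exact ⟨α', hpq.samePos hMM hα hα'⟩

end SamePosition

section SignDiagram

variable {R R' : Type*} [Field R] [LinearOrder R] [Field R'] [LinearOrder R']
  {M : Set (R × R')} {F H T : Set (R[X] × R'[X])}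

/-- A finite order-preserving matching `M` between points of `[-1, 1]` over the two fields such
that the pairs of polynomials in `F` have equal signs at points of equal position relative to `M`,
and those in `H` have equal signs at the points of `M`. -/
structure IsSignDiagram (M : Set (R × R')) (F H : Set (R[X] × R'[X])) : Prop where
  finite : M.Finite
  left_mem : (-1, -1) ∈ M
  right_mem : (1, 1) ∈ M
  fst_mem_Icc : ∀ p ∈ M, p.1 ∈ Set.Icc (-1) 1
  samePos : ∀ p ∈ M, SamePos M p.1 p.2
  sign_eval_eq : ∀ f ∈ F, ∀ α ∈ Set.Icc (-1) 1, ∀ α', SamePos M α α' →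
    SignType.sign (f.1.eval α) = SignType.sign (f.2.eval α')
  sign_eval_eq_of_mem : ∀ h ∈ H, ∀ p ∈ M,
    SignType.sign (h.1.eval p.1) = SignType.sign (h.2.eval p.2)

/-- The conditions on a set `T` of pairs of polynomials under which a sign diagram for `F` can be
refined to one for `F ∪ T`. The last one says that `H` reduces to `F` modulo each element of `T`. -/
structure IsExtendable (F H T : Set (R[X] × R'[X])) : Prop where
  finite : T.Finite
  subset : T ⊆ H
  fst_ne_zero : ∀ f ∈ T, f.1 ≠ 0
  snd_ne_zero : ∀ f ∈ T, f.2 ≠ 0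
  derivative_mem : ∀ f ∈ T, (f.1.derivative, f.2.derivative) ∈ F
  exists_remainder : ∀ f ∈ T, ∀ h ∈ H, ∃ r ∈ F,
    (∀ z, f.1.eval z = 0 → SignType.sign (h.1.eval z) = SignType.sign (r.1.eval z)) ∧
    ∀ z, f.2.eval z = 0 → SignType.sign (h.2.eval z) = SignType.sign (r.2.eval z)

lemma IsExtendable.swap (hT : IsExtendable F H T) :
    IsExtendable (Prod.swap ⁻¹' F) (Prod.swap ⁻¹' H) (Prod.swap ⁻¹' T) where
  finite := hT.finite.preimage Prod.swap_injective.injOn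
  subset := Set.preimage_mono hT.subset
  fst_ne_zero f hf := hT.snd_ne_zero f.swap hf
  snd_ne_zero f hf := hT.fst_ne_zero f.swap hf
  derivative_mem f hf := hT.derivative_mem f.swap hf
  exists_remainder f hf h hh := by
    obtain ⟨r, hr, h₁, h₂⟩ := hT.exists_remainder f.swap hf h.swap hh
    exact ⟨r.swap, hr, h₂, h₁⟩

/-- The pairs of zeros of the two components of an element of `T` that have equal position relative
to `M` and whose first entry lies in `[-1, 1]`. -/
def rootPairs (M : Set (R × R')) (T : Set (R[X] × R'[X])) : Set (R × R') :=
  {p | p.1 ∈ Set.Icc (-1) 1 ∧ SamePos M p.1 p.2 ∧ ∃ f ∈ T, f.1.eval p.1 = 0 ∧ f.2.eval p.2 = 0}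

lemma IsExtendable.finite_rootPairs (hT : IsExtendable F H T) : (rootPairs M T).Finite := by
  refine (hT.finite.biUnion (t := fun f => f.1.rootSet R ×ˢ f.2.rootSet R') fun f _ =>
    (f.1.rootSet_finite R).prod (f.2.rootSet_finite R')).subset ?_
  rintro p ⟨-, -, f, hf, h₁, h₂⟩
  refine Set.mem_biUnion hf ⟨?_, ?_⟩ <;> rw [Polynomial.mem_rootSet]
  · exact ⟨hT.fst_ne_zero f hf, by simpa using h₁⟩
  · exact ⟨hT.snd_ne_zero f hf, by simpa using h₂⟩

namespace IsSignDiagram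

lemma mono (hM : IsSignDiagram M F H) {F' H' : Set (R[X] × R'[X])} (hF : F' ⊆ F) (hH : H' ⊆ H) :
    IsSignDiagram M F' H' :=
  { hM with
    sign_eval_eq := fun f hf => hM.sign_eval_eq f (hF hf)
    sign_eval_eq_of_mem := fun h hh => hM.sign_eval_eq_of_mem h (hH hh) }

lemma swap (hM : IsSignDiagram M F H) :
    IsSignDiagram (Prod.swap ⁻¹' M) (Prod.swap ⁻¹' F) (Prod.swap ⁻¹' H) where
  finite := hM.finite.preimage Prod.swap_injective.injOn
  left_mem := hM.left_mem
  right_mem := hM.right_mem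
  fst_mem_Icc p hp :=
    ((hM.samePos p.swap hp).mem_Icc_iff hM.left_mem hM.right_mem).1 (hM.fst_mem_Icc p.swap hp)
  samePos p hp := (hM.samePos p.swap hp).swap
  sign_eval_eq f hf _ hα _ h :=
    (hM.sign_eval_eq f.swap hf _
      ((SamePos.mem_Icc_iff h.swap hM.left_mem hM.right_mem).2 hα) _ h.swap).symm
  sign_eval_eq_of_mem h hh p hp := (hM.sign_eval_eq_of_mem h.swap hh p.swap hp).symm

lemma exists_mem_or_exists_isCell (hM : IsSignDiagram M F H) {α : R} (hα : α ∈ Set.Icc (-1) 1) :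
    (∃ p ∈ M, p.1 = α) ∨ ∃ p q, IsCell M p q ∧ α ∈ Set.Ioo p.1 q.1 :=
  _root_.exists_mem_or_exists_isCell hM.finite hM.left_mem hM.right_mem hα

lemma mem_Icc_of_mem_Ioo (hM : IsSignDiagram M F H) {p q : R × R'} (hpq : IsCell M p q) {c : R}
    (hc : c ∈ Set.Ioo p.1 q.1) : c ∈ Set.Icc (-1) 1 :=
  ⟨(hM.fst_mem_Icc p hpq.left_mem).1.trans hc.1.le,
    hc.2.le.trans (hM.fst_mem_Icc q hpq.right_mem).2⟩

lemma sign_eval_eq_of_mem_rootPairs (hM : IsSignDiagram M F H) (hT : IsExtendable F H T)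
    {h : R[X] × R'[X]} (hh : h ∈ H) {p : R × R'} (hp : p ∈ rootPairs M T) :
    SignType.sign (h.1.eval p.1) = SignType.sign (h.2.eval p.2) := by
  obtain ⟨hIcc, hpos, f, hf, h₁, h₂⟩ := hp
  obtain ⟨r, hr, hr₁, hr₂⟩ := hT.exists_remainder f hf h hh
  rw [hr₁ _ h₁, hr₂ _ h₂, hM.sign_eval_eq r hr _ hIcc _ hpos]

end IsSignDiagram

variable [IsStrictOrderedRing R] [IsStrictOrderedRing R']

lemma sign_sub_eq_of_cmp_eq {x y : R} {x' y' : R'} (h : cmp x y = cmp x' y') :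
    SignType.sign (x - y) = SignType.sign (x' - y') := by
  rcases lt_trichotomy x y with hxy | rfl | hxy
  · have hxy' := (lt_iff_lt_of_cmp_eq_cmp h).1 hxy
    rw [sign_neg (sub_neg.2 hxy), sign_neg (sub_neg.2 hxy')]
  · rw [(eq_iff_eq_of_cmp_eq_cmp h).1 rfl, sub_self, sub_self, sign_zero, sign_zero]
  · have hxy' := (lt_iff_lt_of_cmp_eq_cmp (cmp_eq_cmp_symm.1 h)).1 hxy
    rw [sign_pos (sub_pos.2 hxy), sign_pos (sub_pos.2 hxy')]

lemma cmp_eq_of_sign_sub_eq {x y : R} {x' y' : R'}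
    (h : SignType.sign (x - y) = SignType.sign (x' - y')) : cmp x y = cmp x' y' := by
  rcases lt_trichotomy x y with hxy | rfl | hxy
  · rw [sign_neg (sub_neg.2 hxy), eq_comm, sign_eq_neg_one_iff, sub_neg] at h
    rw [hxy.cmp_eq_lt, h.cmp_eq_lt]
  · rw [sub_self, sign_zero, eq_comm, sign_eq_zero_iff, sub_eq_zero] at h
    rw [h, cmp_self_eq_eq, cmp_self_eq_eq]
  · rw [sign_pos (sub_pos.2 hxy), eq_comm, sign_eq_one_iff, sub_pos] at h
    rw [hxy.cmp_eq_gt, h.cmp_eq_gt]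

lemma ne_zero_of_sign_eval_sub_eval {f : R[X]} (hf : f ≠ 0) {a b : R} (hab : a < b) {s : SignType}
    (hs : ∀ x ∈ Set.Icc a b, ∀ y ∈ Set.Icc a b,
      SignType.sign (f.eval x - f.eval y) = s * SignType.sign (x - y))
    {z : R} (hz : z ∈ Set.Icc a b) (hfz : f.eval z = 0) : s ≠ 0 := by
  rintro rfl
  refine hf (Polynomial.eq_zero_of_infinite_isRoot f ((Set.Icc_infinite hab).mono fun x hx => ?_))
  simpa [hfz] using hs x hx z hz

namespace IsSignDiagram

lemma exists_sign_eval_sub_eval (hM : IsSignDiagram M F H) (hR : PolyIVT R) (hR' : PolyIVT R')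
    {f : R[X] × R'[X]} (hf : (f.1.derivative, f.2.derivative) ∈ F) {p q : R × R'}
    (hpq : IsCell M p q) : ∃ s : SignType,
      (∀ x ∈ Set.Icc p.1 q.1, ∀ y ∈ Set.Icc p.1 q.1,
        SignType.sign (f.1.eval x - f.1.eval y) = s * SignType.sign (x - y)) ∧
      ∀ x ∈ Set.Icc p.2 q.2, ∀ y ∈ Set.Icc p.2 q.2,
        SignType.sign (f.2.eval x - f.2.eval y) = s * SignType.sign (x - y) := by
  have hsign : ∀ c ∈ Set.Ioo p.1 q.1, ∀ c' ∈ Set.Ioo p.2 q.2,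
      SignType.sign (f.1.derivative.eval c) = SignType.sign (f.2.derivative.eval c') :=
    fun c hc c' hc' => hM.sign_eval_eq _ hf c (hM.mem_Icc_of_mem_Ioo hpq hc) c'
      (hpq.samePos hM.samePos hc hc')
  obtain ⟨c, hc⟩ := exists_between hpq.lt
  obtain ⟨c', hc'⟩ := exists_between (hpq.lt_snd hM.samePos)
  refine ⟨SignType.sign (f.1.derivative.eval c), fun x hx y hy => ?_, fun x hx y hy => ?_⟩
  · exact hR.sign_eval_sub_eval
      (fun d hd => (hsign d hd c' hc').trans (hsign c hc c' hc').symm) hx hy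
  · exact hR'.sign_eval_sub_eval (fun d hd => (hsign c hc d hd).symm) hx hy

lemma exists_samePos_root (hM : IsSignDiagram M F H) (hR : PolyIVT R) (hR' : PolyIVT R')
    (hT : IsExtendable F H T) {f : R[X] × R'[X]} (hf : f ∈ T) {z : R} (hz : z ∈ Set.Icc (-1) 1)
    (hfz : f.1.eval z = 0) : ∃ z', f.2.eval z' = 0 ∧ SamePos M z z' := by
  rcases hM.exists_mem_or_exists_isCell hz with ⟨p, hp, rfl⟩ | ⟨p, q, hpq, hz⟩
  · refine ⟨p.2, ?_, hM.samePos p hp⟩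
    rw [← sign_eq_zero_iff, ← hM.sign_eval_eq_of_mem f (hT.subset hf) p hp, hfz, sign_zero]
  obtain ⟨s, hs, -⟩ := hM.exists_sign_eval_sub_eval hR hR' (hT.derivative_mem f hf) hpq
  have hsign : ∀ x ∈ Set.Icc p.1 q.1, SignType.sign (f.1.eval x) = s * SignType.sign (x - z) :=
    fun x hx => by simpa [hfz] using hs x hx z (Set.Ioo_subset_Icc_self hz)
  have hs0 : s ≠ 0 := ne_zero_of_sign_eval_sub_eval (hT.fst_ne_zero f hf) hpq.lt hs
    (Set.Ioo_subset_Icc_self hz) hfz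
  have hneg : f.2.eval p.2 * f.2.eval q.2 < 0 := by
    rw [← sign_eq_neg_one_iff, sign_mul,
      ← hM.sign_eval_eq_of_mem f (hT.subset hf) p hpq.left_mem,
      ← hM.sign_eval_eq_of_mem f (hT.subset hf) q hpq.right_mem,
      hsign _ (Set.left_mem_Icc.2 hpq.lt.le), hsign _ (Set.right_mem_Icc.2 hpq.lt.le),
      sign_neg (sub_neg.2 hz.1), sign_pos (sub_pos.2 hz.2)]
    clear * - hs0
    decide +revert
  obtain ⟨z', hz', hfz'⟩ := hR' f.2 _ _ (hpq.lt_snd hM.samePos) hneg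
  exact ⟨z', hfz', hpq.samePos hM.samePos hz hz'⟩

lemma cmp_eq_of_mem_rootPairs (hM : IsSignDiagram M F H) (hR : PolyIVT R) (hR' : PolyIVT R')
    (hT : IsExtendable F H T) {z w : R × R'} (hz : z ∈ rootPairs M T) (hw : w ∈ rootPairs M T) :
    cmp z.1 w.1 = cmp z.2 w.2 := by
  rcases hM.exists_mem_or_exists_isCell hz.1 with ⟨p, hp, hpz⟩ | ⟨p, q, hpq, hzpq⟩
  · rw [← hpz, (hz.2.1.eq_iff hp).1 hpz.symm]
    exact cmp_eq_cmp_symm.1 (hw.2.1 p hp)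
  have hz' := (hz.2.1.mem_Ioo_iff hpq.left_mem hpq.right_mem).1 hzpq
  by_cases hwpq : w.1 ∈ Set.Icc p.1 q.1
  · have hw' := (hw.2.1.mem_Icc_iff hpq.left_mem hpq.right_mem).1 hwpq
    obtain ⟨f, hf, h₁, h₂⟩ := hw.2.2
    obtain ⟨s, hs, hs'⟩ := hM.exists_sign_eval_sub_eval hR hR' (hT.derivative_mem f hf) hpq
    have hs0 := ne_zero_of_sign_eval_sub_eval (hT.fst_ne_zero f hf) hpq.lt hs hwpq h₁
    have hsign := hM.sign_eval_eq_of_mem_rootPairs hT (hT.subset hf) hz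
    rw [← sub_zero (f.1.eval z.1), ← h₁, hs _ (Set.Ioo_subset_Icc_self hzpq) _ hwpq,
      ← sub_zero (f.2.eval z.2), ← h₂, hs' _ (Set.Ioo_subset_Icc_self hz') _ hw'] at hsign
    exact cmp_eq_of_sign_sub_eq (mul_left_cancel₀ hs0 hsign)
  · rw [Set.mem_Icc, not_and_or, not_le, not_le] at hwpq
    rcases hwpq with hwp | hqw
    · rw [(hwp.trans hzpq.1).cmp_eq_gt,
        (((hw.2.1.lt_iff hpq.left_mem).1 hwp).trans hz'.1).cmp_eq_gt]
    · rw [(hzpq.2.trans hqw).cmp_eq_lt,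
        (hz'.2.trans ((hw.2.1.gt_iff hpq.right_mem).1 hqw)).cmp_eq_lt]

lemma sign_eval_eq_of_samePos_union (hM : IsSignDiagram M F H) (hR : PolyIVT R) (hR' : PolyIVT R')
    (hT : IsExtendable F H T) {f : R[X] × R'[X]} (hf : f ∈ T) {α : R} (hα : α ∈ Set.Icc (-1) 1)
    {α' : R'} (hαα' : SamePos (M ∪ rootPairs M T) α α') :
    SignType.sign (f.1.eval α) = SignType.sign (f.2.eval α') := by
  have hMα := hαα'.mono Set.subset_union_left
  rcases hM.exists_mem_or_exists_isCell hα with ⟨p, hp, rfl⟩ | ⟨p, q, hpq, hα⟩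
  · rw [(hMα.eq_iff hp).1 rfl, hM.sign_eval_eq_of_mem f (hT.subset hf) p hp]
  have hα' := (hMα.mem_Ioo_iff hpq.left_mem hpq.right_mem).1 hα
  by_cases hroot : ∃ z ∈ Set.Icc p.1 q.1, f.1.eval z = 0
  · obtain ⟨z, hz, hfz⟩ := hroot
    have hzI := Set.Icc_subset_Icc (hM.fst_mem_Icc p hpq.left_mem).1
      (hM.fst_mem_Icc q hpq.right_mem).2 hz
    obtain ⟨z', hfz', hzz'⟩ := hM.exists_samePos_root hR hR' hT hf hzI hfz
    have hz' := (hzz'.mem_Icc_iff hpq.left_mem hpq.right_mem).1 hz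
    obtain ⟨s, hs, hs'⟩ := hM.exists_sign_eval_sub_eval hR hR' (hT.derivative_mem f hf) hpq
    rw [← sub_zero (f.1.eval α), ← hfz, hs _ (Set.Ioo_subset_Icc_self hα) _ hz,
      ← sub_zero (f.2.eval α'), ← hfz', hs' _ (Set.Ioo_subset_Icc_self hα') _ hz',
      sign_sub_eq_of_cmp_eq (hαα' (z, z') (Or.inr ⟨hzI, hzz', f, hf, hfz, hfz'⟩))]
  · have hroot' : ∀ z' ∈ Set.Icc p.2 q.2, f.2.eval z' ≠ 0 := by
      intro z' hz' hfz'
      have hsw := hM.swap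
      obtain ⟨z, hfz, hzz'⟩ := hsw.exists_samePos_root hR' hR hT.swap (f := f.swap) hf
        (Set.Icc_subset_Icc (hsw.fst_mem_Icc p.swap hpq.left_mem).1
          (hsw.fst_mem_Icc q.swap hpq.right_mem).2 hz') hfz'
      exact hroot ⟨z, (SamePos.mem_Icc_iff hzz'.swap hpq.left_mem hpq.right_mem).2 hz', hfz⟩
    push Not at hroot
    calc SignType.sign (f.1.eval α)
        = SignType.sign (f.1.eval p.1) := (hR.sign_eval_eq_of_forall_ne_zero hα.1.le
          fun c hc => hroot c (Set.Icc_subset_Icc_right hα.2.le hc)).symm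
      _ = SignType.sign (f.2.eval p.2) := hM.sign_eval_eq_of_mem f (hT.subset hf) p hpq.left_mem
      _ = SignType.sign (f.2.eval α') := hR'.sign_eval_eq_of_forall_ne_zero hα'.1.le
          fun c hc => hroot' c (Set.Icc_subset_Icc_right hα'.2.le hc)

theorem union_rootPairs (hM : IsSignDiagram M F H) (hR : PolyIVT R) (hR' : PolyIVT R')
    (hT : IsExtendable F H T) : IsSignDiagram (M ∪ rootPairs M T) (F ∪ T) H where
  finite := hM.finite.union (hT.finite_rootPairs)
  left_mem := Or.inl hM.left_mem
  right_mem := Or.inl hM.right_mem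
  fst_mem_Icc := by
    rintro p (hp | hp)
    exacts [hM.fst_mem_Icc p hp, hp.1]
  samePos := by
    rintro p (hp | hp) r (hr | hr)
    exacts [hM.samePos p hp r hr, cmp_eq_cmp_symm.1 (hr.2.1 p hp), hp.2.1 r hr,
      hM.cmp_eq_of_mem_rootPairs hR hR' hT hp hr]
  sign_eval_eq := by
    rintro f (hf | hf) α hα α' hαα'
    exacts [hM.sign_eval_eq f hf α hα α' (hαα'.mono Set.subset_union_left),
      hM.sign_eval_eq_of_samePos_union hR hR' hT hf hα hαα']
  sign_eval_eq_of_mem := by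
    rintro h hh p (hp | hp)
    exacts [hM.sign_eval_eq_of_mem h hh p hp, hM.sign_eval_eq_of_mem_rootPairs hT hh hp]

end IsSignDiagram

end SignDiagram

/-! ### Transfer of sign conditions -/

section Transfer

variable {A R R' : Type*} [CommRing A]

/-- `u` and `u'` have equal signs at every element of `B`. -/
def SameSigns [Zero R] [LinearOrder R] [Zero R'] [LinearOrder R'] (B : Set A) (u : A → R)
    (u' : A → R') : Prop :=
  ∀ b ∈ B, SignType.sign (u b) = SignType.sign (u' b)

lemma exists_pseudo_remainder {g : A[X]} {d : ℕ} (hg : g.degree < (d + 1 : ℕ)) (h : A[X]) :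
    ∃ r : A[X], (∃ (k : ℕ) (u : A[X]), Polynomial.C (g.coeff d) ^ (2 * k) * h = u * g + r) ∧
      r.degree < d := by
  suffices ∀ (n : ℕ) (h : A[X]), h.degree < n → ∃ r : A[X], (∃ (k : ℕ) (u : A[X]),
      Polynomial.C (g.coeff d) ^ (2 * k) * h = u * g + r) ∧ r.degree < d from
    this (h.natDegree + 1) h (Polynomial.degree_lt_iff_coeff_zero _ _ |>.2 fun m hm =>
      Polynomial.coeff_eq_zero_of_natDegree_lt hm)
  intro n
  induction n with
  | zero =>
    intro h hh
    exact ⟨h, ⟨0, 0, by simp⟩, hh.trans_le (by exact_mod_cast Nat.zero_le d)⟩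
  | succ n ih =>
    intro h hh
    rcases lt_or_ge n d with hnd | hdn
    · exact ⟨h, ⟨0, 0, by simp⟩, hh.trans_le (by exact_mod_cast hnd)⟩
    let q := Polynomial.C (g.coeff d * h.coeff n) * Polynomial.X ^ (n - d)
    have hdeg : (Polynomial.C (g.coeff d) ^ 2 * h - q * g).degree < n := by
      rw [Polynomial.degree_lt_iff_coeff_zero] at hg hh ⊢
      intro m hm
      simp only [q, Polynomial.coeff_sub, ← Polynomial.C_pow, mul_assoc, Polynomial.coeff_C_mul,
        Polynomial.coeff_X_pow_mul', if_pos ((Nat.sub_le n d).trans hm)]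
      rcases hm.eq_or_lt with rfl | hm
      · rw [Nat.sub_sub_self hdn]; ring
      · rw [hh m hm, hg (m - (n - d)) (by omega)]; ring
    obtain ⟨r, ⟨k, u, hu⟩, hr⟩ := ih _ hdeg
    refine ⟨r, ⟨k + 1, u + Polynomial.C (g.coeff d) ^ (2 * k) * q, ?_⟩, hr⟩
    linear_combination hu

lemma map_erase_of_map_coeff_eq_zero {B : Type*} [Semiring B] (φ : A →+* B) {g : A[X]} {d : ℕ}
    (h : φ (g.coeff d) = 0) :
    (g.erase d).map φ = g.map φ := by
  conv_rhs => rw [← g.monomial_add_erase d]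
  rw [Polynomial.map_add, Polynomial.map_monomial, h, map_zero, zero_add]

lemma degree_derivative_lt_of_degree_lt {g : A[X]} {d : ℕ} (hg : g.degree < (d + 1 : ℕ)) :
    g.derivative.degree < d := by
  rw [Polynomial.degree_lt_iff_coeff_zero] at hg ⊢
  intro m hm
  rw [Polynomial.coeff_derivative, hg _ (Nat.succ_le_succ hm), zero_mul]

lemma degree_erase_lt_of_degree_lt {g : A[X]} {d : ℕ} (hg : g.degree < (d + 1 : ℕ)) :
    (g.erase d).degree < d := by
  rw [Polynomial.degree_lt_iff_coeff_zero] at hg ⊢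
  intro m hm
  rcases hm.eq_or_lt with rfl | hm
  · exact Polynomial.erase_same g d
  · rw [Polynomial.erase_ne g hm.ne', hg m hm]

variable [Field R] [LinearOrder R] [Field R'] [LinearOrder R']

/-- The images of a polynomial under two ring homomorphisms. -/
def mapPair (φ : A →+* R) (φ' : A →+* R') (f : A[X]) : R[X] × R'[X] :=
  (f.map φ, f.map φ')

lemma SameSigns.sign_eval_mapPair {B : Set A} {φ : A →+* R} {φ' : A →+* R'}
    (hφ : SameSigns B φ φ') {f : A[X]} {a : A} (ha : f.eval a ∈ B) :
    SignType.sign ((mapPair φ φ' f).1.eval (φ a)) =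
      SignType.sign ((mapPair φ φ' f).2.eval (φ' a)) := by
  simpa only [mapPair, Polynomial.eval_map, Polynomial.eval₂_at_apply] using hφ _ ha

variable [IsStrictOrderedRing R] [IsStrictOrderedRing R']

lemma sign_eval_map_eq_of_pseudo_remainder (φ : A →+* R) {g h u r : A[X]} {c : A} {k : ℕ}
    (heq : Polynomial.C c ^ (2 * k) * h = u * g + r) (hc : φ c ≠ 0) {z : R}
    (hz : (g.map φ).eval z = 0) :
    SignType.sign ((h.map φ).eval z) = SignType.sign ((r.map φ).eval z) := by
  have heval : φ c ^ (2 * k) * (h.map φ).eval z = (r.map φ).eval z := by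
    simpa [hz] using congrArg (fun f => (f.map φ).eval z) heq
  rw [← heval, sign_mul, sign_pos ((even_two_mul k).pow_pos hc), one_mul]

lemma isExtendable_image_mapPair {φ : A →+* R} {φ' : A →+* R'} {F H G : Set A[X]} {d : ℕ}
    (hG : G.Finite) (hGH : G ⊆ H) (hcoeff : ∀ g ∈ G, φ (g.coeff d) ≠ 0)
    (hcoeff' : ∀ g ∈ G, φ' (g.coeff d) ≠ 0) (hderiv : ∀ g ∈ G, g.derivative ∈ F)
    (hrem : ∀ g ∈ G, ∀ h ∈ H, ∃ r ∈ F, ∃ (k : ℕ) (u : A[X]),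
      Polynomial.C (g.coeff d) ^ (2 * k) * h = u * g + r) :
    IsExtendable (mapPair φ φ' '' F) (mapPair φ φ' '' H) (mapPair φ φ' '' G) where
  finite := hG.image _
  subset := Set.image_mono hGH
  fst_ne_zero := by
    rintro _ ⟨g, hg, rfl⟩ h0
    exact hcoeff g hg (by simpa [mapPair] using congrArg (Polynomial.coeff · d) h0)
  snd_ne_zero := by
    rintro _ ⟨g, hg, rfl⟩ h0
    exact hcoeff' g hg (by simpa [mapPair] using congrArg (Polynomial.coeff · d) h0)
  derivative_mem := by
    rintro _ ⟨g, hg, rfl⟩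
    exact ⟨g.derivative, hderiv g hg, by simp [mapPair]⟩
  exists_remainder := by
    rintro _ ⟨g, hg, rfl⟩ _ ⟨h, hh, rfl⟩
    obtain ⟨r, hr, k, u, heq⟩ := hrem g hg h hh
    exact ⟨_, ⟨r, hr, rfl⟩,
      fun _ => sign_eval_map_eq_of_pseudo_remainder φ heq (hcoeff g hg),
      fun _ => sign_eval_map_eq_of_pseudo_remainder φ' heq (hcoeff' g hg)⟩

lemma isSignDiagram_endpoints {H : Set (R[X] × R'[X])}
    (hl : ∀ h ∈ H, SignType.sign (h.1.eval (-1)) = SignType.sign (h.2.eval (-1)))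
    (hr : ∀ h ∈ H, SignType.sign (h.1.eval 1) = SignType.sign (h.2.eval 1)) :
    IsSignDiagram {(-1, -1), (1, 1)} {0} H where
  finite := Set.toFinite _
  left_mem := by simp
  right_mem := by simp
  fst_mem_Icc := by simp
  samePos := by
    have h : (-1 : R) < 1 := by norm_num
    have h' : (-1 : R') < 1 := by norm_num
    simp [SamePos, h.cmp_eq_lt, h'.cmp_eq_lt, h.cmp_eq_gt, h'.cmp_eq_gt]
  sign_eval_eq := by simp
  sign_eval_eq_of_mem := by
    rintro h hh _ (rfl | rfl)
    exacts [hl h hh, hr h hh]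

/-- Differentiating, dropping top coefficients and reducing modulo the elements of `G` lowers the
degree bound; a sign diagram for the resulting polynomials is refined by the zeros of those elements
of `G` whose top coefficient survives. -/
theorem exists_isSignDiagram (hR : PolyIVT R) (hR' : PolyIVT R') (d : ℕ) {G H : Set A[X]}
    (hG : G.Finite) (hH : H.Finite) (hd : ∀ g ∈ G, g.degree < d) :
    ∃ B : Set A, B.Finite ∧ ∀ (φ : A →+* R) (φ' : A →+* R'), SameSigns B φ φ' →
      ∃ M, IsSignDiagram M (mapPair φ φ' '' G) (mapPair φ φ' '' H) := by
  induction d generalizing G H with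
  | zero =>
    refine ⟨Polynomial.eval (-1) '' H ∪ Polynomial.eval 1 '' H, (hH.image _).union (hH.image _),
      fun φ φ' hφ => ⟨_, (isSignDiagram_endpoints ?_ ?_).mono ?_ subset_rfl⟩⟩
    · rintro _ ⟨h, hh, rfl⟩
      simpa using hφ.sign_eval_mapPair (Or.inl ⟨h, hh, rfl⟩)
    · rintro _ ⟨h, hh, rfl⟩
      simpa using hφ.sign_eval_mapPair (Or.inr ⟨h, hh, rfl⟩)
    · rintro _ ⟨g, hg, rfl⟩
      have hg0 : g = 0 := by
        simpa [Polynomial.degree_lt_iff_coeff_zero, Polynomial.ext_iff] using hd g hg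
      simp [hg0, mapPair]
  | succ d ih =>
    have hrem : ∀ h, ∀ g ∈ G, _ := fun h g hg => exists_pseudo_remainder (hd g hg) h
    choose! r hr hrd using hrem
    let H₀ := G ∪ H
    let G₀ := Polynomial.derivative '' G ∪ Polynomial.erase d '' G ∪ Set.image2 r H₀ G
    have hH₀ : H₀.Finite := hG.union hH
    have hG₀ : G₀.Finite := ((hG.image _).union (hG.image _)).union (hH₀.image2 r hG)
    have hd₀ : ∀ g ∈ G₀, g.degree < d := by
      rintro _ ((⟨g, hg, rfl⟩ | ⟨g, hg, rfl⟩) | ⟨h, -, g, hg, rfl⟩)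
      exacts [degree_derivative_lt_of_degree_lt (hd g hg),
        degree_erase_lt_of_degree_lt (hd g hg), hrd h g hg]
    obtain ⟨B, hB, hBM⟩ := ih hG₀ hH₀ hd₀
    refine ⟨B ∪ (Polynomial.coeff · d) '' G, hB.union (hG.image _), fun φ φ' hφ => ?_⟩
    obtain ⟨M, hM⟩ := hBM φ φ' fun b hb => hφ b (Or.inl hb)
    have hcoeff : ∀ g ∈ G, φ (g.coeff d) = 0 ↔ φ' (g.coeff d) = 0 := fun g hg => by
      rw [← sign_eq_zero_iff, hφ _ (Or.inr ⟨g, hg, rfl⟩), sign_eq_zero_iff]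
    have hT := isExtendable_image_mapPair (φ := φ) (φ' := φ') (F := G₀) (H := H₀)
      (G := {g ∈ G | φ (g.coeff d) ≠ 0}) (d := d) (hG.subset (Set.sep_subset _ _))
      (fun g hg => Or.inl hg.1) (fun g hg => hg.2) (fun g hg => (hcoeff g hg.1).not.1 hg.2)
      (fun g hg => Or.inl (Or.inl ⟨g, hg.1, rfl⟩))
      fun g hg h hh => ⟨r h g, Or.inr ⟨h, hh, g, hg.1, rfl⟩, hr h g hg.1⟩
    refine ⟨_, (hM.union_rootPairs hR hR' hT).mono ?_ (Set.image_mono Set.subset_union_right)⟩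
    rintro _ ⟨g, hg, rfl⟩
    by_cases hg0 : φ (g.coeff d) = 0
    · refine Or.inl ⟨g.erase d, Or.inl (Or.inr ⟨g, hg, rfl⟩), ?_⟩
      rw [mapPair, map_erase_of_map_coeff_eq_zero φ hg0,
        map_erase_of_map_coeff_eq_zero φ' ((hcoeff g hg).1 hg0), mapPair]
    · exact Or.inr ⟨g, ⟨hg, hg0⟩, rfl⟩

lemma sign_eval₂_inv (φ : A →+* R) (g : A[X]) {β : R} (hβ : β ≠ 0) :
    SignType.sign (g.eval₂ φ β⁻¹) =
      SignType.sign (g.reverse.eval₂ φ β) * SignType.sign β ^ g.natDegree := by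
  let := invertibleOfNonzero (inv_ne_zero hβ)
  have hrev : g.eval₂ φ β⁻¹ * β ^ (2 * g.natDegree) =
      g.reverse.eval₂ φ β * β ^ g.natDegree := by
    rw [← Polynomial.eval₂_reverse_mul_pow φ β⁻¹ g, invOf_eq_inv, inv_inv, mul_assoc, two_mul,
      pow_add, ← mul_assoc (β⁻¹ ^ _), ← mul_pow, inv_mul_cancel₀ hβ, one_pow, one_mul]
  simpa [sign_mul, sign_pow, sign_pos ((even_two_mul g.natDegree).pow_pos hβ)]
    using congrArg SignType.sign hrev

/-- For arguments outside `[-1, 1]`, pass to the inverse and the reversed polynomials. -/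
theorem exists_sameSigns_eval₂ (hR : PolyIVT R) (hR' : PolyIVT R') {G : Set A[X]}
    (hG : G.Finite) : ∃ B : Set A, B.Finite ∧ ∀ (φ : A →+* R) (φ' : A →+* R'), SameSigns B φ φ' →
      ∀ α, ∃ α', SameSigns G (Polynomial.eval₂ φ α) (Polynomial.eval₂ φ' α') := by
  let G₁ := insert Polynomial.X (G ∪ Polynomial.reverse '' G)
  have hG₁ : G₁.Finite := (hG.union (hG.image _)).insert _
  obtain ⟨N, hN⟩ := (hG₁.image Polynomial.natDegree).bddAbove
  have hd : ∀ g ∈ G₁, g.degree < (N + 1 : ℕ) := fun g hg =>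
    g.degree_le_natDegree.trans_lt (by exact_mod_cast Nat.lt_succ_of_le (hN ⟨g, hg, rfl⟩))
  obtain ⟨B, hB, hBM⟩ := exists_isSignDiagram hR hR' (N + 1) hG₁ Set.finite_empty hd
  refine ⟨B, hB, fun φ φ' hφ => ?_⟩
  obtain ⟨M, hM⟩ := hBM φ φ' hφ
  have hIcc (β : R) (hβ : β ∈ Set.Icc (-1) 1) :
      ∃ β', SameSigns G₁ (Polynomial.eval₂ φ β) (Polynomial.eval₂ φ' β') := by
    obtain ⟨β', hβ'⟩ := exists_samePos hM.finite hM.samePos hM.left_mem hM.right_mem hβ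
    exact ⟨β', fun g hg => by
      simpa [mapPair, Polynomial.eval_map] using hM.sign_eval_eq _ ⟨g, hg, rfl⟩ β hβ β' hβ'⟩
  intro α
  by_cases hα : α ∈ Set.Icc (-1) 1
  · obtain ⟨α', hα'⟩ := hIcc α hα
    exact ⟨α', fun g hg => hα' g (Or.inr (Or.inl hg))⟩
  rw [Set.mem_Icc, ← abs_le, not_le] at hα
  obtain ⟨β', hβ'⟩ := hIcc α⁻¹ (abs_le.1 (by rw [abs_inv]; exact inv_le_one_of_one_le₀ hα.le))
  have hα₀ : α ≠ 0 := abs_pos.1 (one_pos.trans hα)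
  have hsign : SignType.sign α⁻¹ = SignType.sign β' := by
    simpa using hβ' Polynomial.X (Set.mem_insert _ _)
  have hβ'₀ : β' ≠ 0 := by
    rw [← sign_ne_zero, ← hsign, sign_ne_zero]
    exact inv_ne_zero hα₀
  refine ⟨β'⁻¹, fun g hg => ?_⟩
  rw [← inv_inv α, sign_eval₂_inv φ g (inv_ne_zero hα₀), sign_eval₂_inv φ' g hβ'₀, ← hsign,
    hβ' _ (Or.inr (Or.inr ⟨g, hg, rfl⟩))]

lemma eval₂_cons_eq_eval₂_finSuccEquiv {B : Type*} [CommRing B] {n : ℕ} (φ : A →+* B) (y : B)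
    (x : Fin n → B) (f : MvPolynomial (Fin (n + 1)) A) :
    f.eval₂ φ (Fin.cons y x : Fin (n + 1) → B) =
      (finSuccEquiv A n f).eval₂ (eval₂Hom φ x) y := by
  induction f using MvPolynomial.induction_on with
  | C a => simp [finSuccEquiv_apply]
  | add p q hp hq => simp [hp, hq]
  | mul_X p i hp =>
    rw [eval₂_mul, eval₂_X, hp, map_mul, Polynomial.eval₂_mul]
    cases i using Fin.cases <;> simp [finSuccEquiv_apply]

theorem exists_sameSigns_mvPolynomial_eval₂ (hR : PolyIVT R) (hR' : PolyIVT R') {n : ℕ}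
    {Q : Set (MvPolynomial (Fin n) A)} (hQ : Q.Finite) :
    ∃ B : Set A, B.Finite ∧ ∀ (φ : A →+* R) (φ' : A →+* R'), SameSigns B φ φ' →
      ∀ x : Fin n → R, ∃ x' : Fin n → R', SameSigns Q (eval₂ φ x) (eval₂ φ' x') := by
  induction n with
  | zero =>
    refine ⟨coeff 0 '' Q, hQ.image _, fun φ φ' hφ x => ⟨0, fun f hf => ?_⟩⟩
    rw [f.eq_C_of_isEmpty, eval₂_C, eval₂_C]
    exact hφ _ ⟨f, hf, rfl⟩
  | succ n ih =>
    obtain ⟨B₁, hB₁, h₁⟩ := exists_sameSigns_eval₂ hR hR' (hQ.image (finSuccEquiv A n))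
    obtain ⟨B, hB, h⟩ := ih hB₁
    refine ⟨B, hB, fun φ φ' hφ x => ?_⟩
    obtain ⟨t', ht'⟩ := h φ φ' hφ (Fin.tail x)
    obtain ⟨y', hy'⟩ := h₁ (eval₂Hom φ (Fin.tail x)) (eval₂Hom φ' t') ht' (x 0)
    refine ⟨Fin.cons y' t', fun f hf => ?_⟩
    rw [← Fin.cons_self_tail x, eval₂_cons_eq_eval₂_finSuccEquiv, eval₂_cons_eq_eval₂_finSuccEquiv]
    exact hy' _ ⟨f, hf, rfl⟩

end Transfer

/-! ### The Positivstellensatz over the reals -/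

lemma polyIVT_real : PolyIVT ℝ := by
  intro f a b hab hf
  rcases mul_neg_iff.1 hf with ⟨ha, hb⟩ | ⟨ha, hb⟩
  · exact intermediate_value_Ioo' hab.le f.continuousOn ⟨hb, ha⟩
  · exact intermediate_value_Ioo hab.le f.continuousOn ⟨ha, hb⟩

section Positivstellensatz
variable {R : Type*} [Field R] [LinearOrder R] [IsStrictOrderedRing R]

lemma sign_realHom (ι : ℝ →+* R) (c : ℝ) : SignType.sign (ι c) = SignType.sign c := by
  have hι : StrictMono ι := by
    refine (monotone_iff_map_nonneg ι).2 (fun a ha => ?_) |>.strictMono_of_injective ι.injective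
    rw [← Real.mul_self_sqrt ha, map_mul]
    exact mul_self_nonneg _
  simpa using hι.sign_comp (f := (ι : ℝ →+ R)) (a := c)

theorem exists_sameSigns_eval (hR : PolyIVT R) (ι : ℝ →+* R) {n : ℕ}
    {G : Set (MvPolynomial (Fin n) ℝ)} (hG : G.Finite) (x : Fin n → R) :
    ∃ y : Fin n → ℝ, SameSigns G (eval₂ ι x) (eval y) := by
  obtain ⟨B, -, hB⟩ := exists_sameSigns_mvPolynomial_eval₂ hR polyIVT_real hG
  exact hB ι (RingHom.id ℝ) (fun c _ => sign_realHom ι c) x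

variable {n : ℕ} {T : Subsemiring (MvPolynomial (Fin n) ℝ)} (hT : ∀ f, f * f ∈ T)
  {G : Set (MvPolynomial (Fin n) ℝ)} (hG : G.Finite) (hGT : G ⊆ T)
include hT hG hGT

/-- The Krivine–Stengle theorem: a point over an ordered field containing `ℝ` that satisfies the
inequalities `g ≥ 0` comes from an ordering above `T`, and is transferred to a real point. -/
theorem neg_one_mem_of_forall_exists_eval_neg (h : ∀ x, ∃ g ∈ G, eval x g < 0) : -1 ∈ T := by
  by_contra hneg
  let P : RingPreordering (MvPolynomial (Fin n) ℝ) :=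
    { T with
      mem_of_isSquare' := by
        rintro _ ⟨f, rfl⟩
        exact hT f
      neg_one_notMem' := hneg }
  obtain ⟨F, _, _, _, φ, hφ⟩ := exists_orderedField_ringHom_nonneg P
  obtain ⟨R, _, _, _, ψ, hψ, hR⟩ := exists_polyIVT_extension F
  let χ : MvPolynomial (Fin n) ℝ →+* R := ψ.comp φ
  have hχ (f) : eval₂ (χ.comp C) (χ ∘ X) f = χ f := by rw [← eval₂_comp_left, eval₂_eta]
  obtain ⟨y, hy⟩ := exists_sameSigns_eval hR (χ.comp C) hG (χ ∘ X)
  obtain ⟨g, hg, hneg⟩ := h y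
  have hsign := hy g hg
  rw [hχ, sign_neg hneg, sign_eq_neg_one_iff] at hsign
  exact hsign.not_ge (hψ _ (hφ _ (hGT hg)))

theorem exists_mul_eq_one_add {h : MvPolynomial (Fin n) ℝ}
    (hpos : ∀ x, (∀ g ∈ G, 0 ≤ eval x g) → 0 < eval x h) :
    ∃ s ∈ T, ∃ t ∈ T, s * h = 1 + t := by
  have hle := le_adjoinCone (hT (-h))
  obtain ⟨t, ht, s, hs, e⟩ : -1 ∈ adjoinCone T (-h) (hT (-h)) := by
    refine neg_one_mem_of_forall_exists_eval_neg (fun f => hle (hT f)) (hG.insert (-h))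
      (Set.insert_subset (mem_adjoinCone_self _) (hGT.trans hle)) fun x => ?_
    by_cases hx : ∀ g ∈ G, 0 ≤ eval x g
    · exact ⟨-h, Set.mem_insert _ _, by simpa using hpos x hx⟩
    · push Not at hx
      obtain ⟨g, hg, hlt⟩ := hx
      exact ⟨g, Set.mem_insert_of_mem _ hg, hlt⟩
  exact ⟨s, hs, t, ht, by linear_combination e⟩

end Positivstellensatz

/-! ### Preorderings and their bounded elements -/

section Preorderings
variable {E : Type*} [CommRing E]

/-- The monoid of the products `a² ∏ gⱼ ^ νⱼ` with `ν ∈ {0,1}^m`, whose sums make up the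
preordering generated by `g`. -/
def squareProducts {m : ℕ} (g : Fin m → E) : Submonoid E where
  carrier := {x | ∃ (a : E) (ν : Fin m → Bool), x = a * a * ∏ j, (if ν j then g j else 1)}
  one_mem' := ⟨1, fun _ => false, by simp⟩
  mul_mem' := by
    rintro _ _ ⟨a, ν, rfl⟩ ⟨b, ν', rfl⟩
    refine ⟨a * b * ∏ j, (if ν j && ν' j then g j else 1), fun j => xor (ν j) (ν' j), ?_⟩
    have hprod : (∏ j, (if ν j then g j else 1)) * (∏ j, (if ν' j then g j else 1)) =
        (∏ j, (if ν j && ν' j then g j else 1)) * (∏ j, (if ν j && ν' j then g j else 1)) *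
          ∏ j, (if xor (ν j) (ν' j) then g j else 1) := by
      simp only [← Finset.prod_mul_distrib]
      refine Finset.prod_congr rfl fun j _ => ?_
      cases ν j <;> cases ν' j <;> simp
    linear_combination (a * a * (b * b)) * hprod

/-- The preordering generated by `g`, as a subsemiring. -/
def preorderingClosure {m : ℕ} (g : Fin m → E) : Subsemiring E :=
  (squareProducts g).subsemiringClosure

lemma mul_self_mem_preorderingClosure {m : ℕ} (g : Fin m → E) (a : E) :
    a * a ∈ preorderingClosure g :=
  AddSubmonoid.subset_closure ⟨a, fun _ => false, by simp⟩

lemma mem_preorderingClosure {m : ℕ} (g : Fin m → E) (i : Fin m) : g i ∈ preorderingClosure g :=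
  AddSubmonoid.subset_closure ⟨1, fun j => decide (j = i), by simp⟩

lemma preorderingClosure_subset_genPreordering {m : ℕ} (g : Fin m → E) :
    (preorderingClosure g : Set E) ⊆ genPreordering g := by
  intro x hx
  induction hx using AddSubmonoid.closure_induction with
  | mem x hx =>
    obtain ⟨a, ν, rfl⟩ := hx
    refine ⟨Pi.single ν (a * a), fun ν' => ?_, ?_⟩
    · obtain rfl | h := eq_or_ne ν' ν
      · simp [IsSumSq.mul_self]
      · simp [h]
    · rw [Finset.sum_eq_single ν (fun ν' _ h => by simp [h]) (by simp), Pi.single_eq_same]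
  | zero => exact ⟨0, by simp, by simp⟩
  | add x y _ _ hx hy =>
    obtain ⟨σ, hσ, rfl⟩ := hx
    obtain ⟨τ, hτ, rfl⟩ := hy
    exact ⟨σ + τ, fun ν => (hσ ν).add (hτ ν), by simp [add_mul, Finset.sum_add_distrib]⟩

variable [Algebra ℝ E] {T : Subsemiring E} (hT : ∀ a, a * a ∈ T)
include hT

lemma algebraMap_mem_of_nonneg {c : ℝ} (hc : 0 ≤ c) : algebraMap ℝ E c ∈ T := by
  rw [← Real.mul_self_sqrt hc, map_mul]
  exact hT _

lemma mem_of_two_mul_mem {a : E} (ha : 2 * a ∈ T) : a ∈ T := by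
  have h : algebraMap ℝ E (1 / 2) * (2 * a) = a := by
    rw [← mul_assoc, ← map_ofNat (algebraMap ℝ E) 2, ← map_mul]
    norm_num
  rw [← h]
  exact mul_mem (algebraMap_mem_of_nonneg hT (by norm_num)) ha

variable (T) in
/-- The subalgebra of the elements bounded above and below by real constants modulo `T`. -/
def boundedSubalgebra : Subalgebra ℝ E where
  carrier := {b | ∃ c : ℝ, algebraMap ℝ E c - b ∈ T ∧ algebraMap ℝ E c + b ∈ T}
  mul_mem' := by
    rintro a b ⟨c, ha, ha'⟩ ⟨d, hb, hb'⟩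
    refine ⟨c * d, mem_of_two_mul_mem hT ?_, mem_of_two_mul_mem hT ?_⟩
    · convert add_mem (mul_mem ha hb') (mul_mem ha' hb) using 1
      rw [map_mul]; ring
    · convert add_mem (mul_mem ha hb) (mul_mem ha' hb') using 1
      rw [map_mul]; ring
  add_mem' := by
    rintro a b ⟨c, ha, ha'⟩ ⟨d, hb, hb'⟩
    refine ⟨c + d, ?_, ?_⟩
    · convert add_mem ha hb using 1
      rw [map_add]; ring
    · convert add_mem ha' hb' using 1
      rw [map_add]; ring
  algebraMap_mem' r := by
    refine ⟨|r|, ?_, ?_⟩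
    · rw [← map_sub]
      exact algebraMap_mem_of_nonneg hT (sub_nonneg.2 (le_abs_self r))
    · rw [← map_add]
      exact algebraMap_mem_of_nonneg hT (by linarith [neg_abs_le r])

lemma mem_boundedSubalgebra_of_sub_mem {a b : E} (hb : b ∈ T) (hab : a - b ∈ T)
    (ha : a ∈ boundedSubalgebra T hT) : b ∈ boundedSubalgebra T hT := by
  obtain ⟨c, hc, -⟩ := ha
  have hcb : algebraMap ℝ E c - b ∈ T := by simpa using add_mem hc hab
  exact ⟨c, hcb, by convert add_mem (add_mem hcb hb) hb using 1; ring⟩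

lemma mem_boundedSubalgebra_of_mul_self_mem {b : E} (hb : b * b ∈ boundedSubalgebra T hT) :
    b ∈ boundedSubalgebra T hT := by
  obtain ⟨c, hc, -⟩ := hb
  refine ⟨c + 1, mem_of_two_mul_mem hT ?_, mem_of_two_mul_mem hT ?_⟩
  · convert add_mem (add_mem (add_mem hc hc) (hT b)) (add_mem (hT (b - 1)) (one_mem _)) using 1
    rw [map_add, map_one]; ring
  · convert add_mem (add_mem (add_mem hc hc) (hT b)) (add_mem (hT (b + 1)) (one_mem _)) using 1
    rw [map_add, map_one]; ring

/-- If `b² ≤ c b` modulo `T`, then `(2 b - c)² ≤ c²`. -/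
lemma mem_boundedSubalgebra_of_mul_self_le {b : E} {c : ℝ} (h : algebraMap ℝ E c * b - b * b ∈ T) :
    b ∈ boundedSubalgebra T hT := by
  have hd : 2 * b - algebraMap ℝ E c ∈ boundedSubalgebra T hT := by
    refine mem_boundedSubalgebra_of_mul_self_mem hT (mem_boundedSubalgebra_of_sub_mem hT (hT _)
      ?_ (Subalgebra.algebraMap_mem _ (c * c)))
    convert add_mem (add_mem h h) (add_mem h h) using 1
    rw [map_mul]; ring
  convert Subalgebra.smul_mem _ (add_mem hd (Subalgebra.algebraMap_mem _ c)) (1 / 2 : ℝ) using 1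
  rw [sub_add_cancel, Algebra.smul_def, ← mul_assoc, ← map_ofNat (algebraMap ℝ E) 2, ← map_mul]
  norm_num

lemma mem_boundedSubalgebra_of_sum_mul_self_mem {ι : Type*} [Fintype ι] {x : ι → E}
    (h : ∑ i, x i * x i ∈ boundedSubalgebra T hT) (i : ι) : x i ∈ boundedSubalgebra T hT := by
  classical
  refine mem_boundedSubalgebra_of_mul_self_mem hT
    (mem_boundedSubalgebra_of_sub_mem hT (hT (x i)) ?_ h)
  rw [← Finset.add_sum_erase _ _ (Finset.mem_univ i), add_sub_cancel_left]
  exact Subsemiring.sum_mem T fun j _ => hT (x j)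

/-- If multiplication by `e ≥ 1` maps a larger preordering `T'` into `T`, then modulo `T` the
element `θ = e w²` satisfies `θ² ≤ c θ`, hence is bounded, and `(b w)² ≤ e (b w)² ≤ c' θ`. -/
lemma mul_mem_boundedSubalgebra_of_forall_mul_mem {T' : Subsemiring E} (hT' : ∀ a, a * a ∈ T')
    {e : E} (he : e - 1 ∈ T) (heT : ∀ a ∈ T', e * a ∈ T) {b w : E}
    (hw : e * (w * w) ∈ boundedSubalgebra T' hT') (hb : b ∈ boundedSubalgebra T' hT') :
    b * w ∈ boundedSubalgebra T hT := by
  have hθ : e * (w * w) ∈ boundedSubalgebra T hT := by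
    obtain ⟨c, hc, -⟩ := hw
    refine mem_boundedSubalgebra_of_mul_self_le hT (c := c) ?_
    convert mul_mem (heT _ hc) (hT w) using 1
    ring
  obtain ⟨c, hc, -⟩ := mul_mem hb hb
  refine mem_boundedSubalgebra_of_mul_self_mem hT (mem_boundedSubalgebra_of_sub_mem hT (hT _) ?_
    (mul_mem (Subalgebra.algebraMap_mem _ c) hθ))
  convert add_mem (mul_mem (heT _ hc) (hT w)) (mul_mem he (hT (b * w))) using 1
  ring

end Preorderings

/-! ### Homogeneous coordinates -/

section Homogeneous
variable {n : ℕ}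

/-- The homogeneous coordinates `(v, x₁ v, …, xₙ v)` of the point `x`. -/
def homogeneousCoords {A : Type*} [Mul A] (v : A) (x : Fin n → A) : Fin (n + 1) → A :=
  Fin.cons v fun i => x i * v

lemma homogeneousCoords_mul {A : Type*} [CommSemigroup A] (v w : A) (x : Fin n → A)
    (j : Fin (n + 1)) : homogeneousCoords (v * w) x j = homogeneousCoords v x j * w := by
  cases j using Fin.cases with
  | zero => rfl
  | succ i => exact (mul_assoc _ _ _).symm

/-- The affine point with homogeneous coordinates `y`, meaningful for `y₀ ≠ 0`. -/
def dehomogenize (y : Fin (n + 1) → ℝ) : Fin n → ℝ :=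
  fun i => y i.succ / y 0

lemma measurable_dehomogenize : Measurable (dehomogenize (n := n)) :=
  measurable_pi_lambda _ fun _ => (measurable_pi_apply _).div (measurable_pi_apply _)

lemma homogeneousCoords_dehomogenize {y : Fin (n + 1) → ℝ} (hy : y 0 ≠ 0) :
    homogeneousCoords (y 0) (dehomogenize y) = y := by
  funext j
  cases j using Fin.cases with
  | zero => rfl
  | succ i => exact div_mul_cancel₀ _ hy

section Polynomials
variable {R : Type*} [CommSemiring R]

/-- The polynomial `F` in homogeneous coordinates represents `vᵐ f (x)`; it need not be
homogeneous, since `v` is itself one of the coordinates. -/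
def IsHomogenization (m : ℕ) (f : MvPolynomial (Fin n) R) (F : MvPolynomial (Fin (n + 1)) R) :
    Prop :=
  aeval (homogeneousCoords (X 0) fun i => X i.succ) F = X 0 ^ m * rename Fin.succ f

lemma exists_isHomogenization (f : MvPolynomial (Fin n) R) :
    ∃ m₀, ∀ m ≥ m₀, ∃ F, IsHomogenization m f F := by
  induction f using MvPolynomial.induction_on with
  | C a => exact ⟨0, fun m _ => ⟨X 0 ^ m * C a, by simp [IsHomogenization, homogeneousCoords]⟩⟩
  | add f g hf hg =>
    obtain ⟨m₁, hf⟩ := hf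
    obtain ⟨m₂, hg⟩ := hg
    refine ⟨max m₁ m₂, fun m hm => ?_⟩
    obtain ⟨F, hF⟩ := hf m ((le_max_left _ _).trans hm)
    obtain ⟨G, hG⟩ := hg m ((le_max_right _ _).trans hm)
    refine ⟨F + G, ?_⟩
    rw [IsHomogenization, map_add, hF, hG, map_add, mul_add]
  | mul_X f i hf =>
    obtain ⟨m₁, hf⟩ := hf
    refine ⟨m₁ + 1, fun m hm => ?_⟩
    obtain ⟨m, rfl⟩ := Nat.exists_eq_add_of_le' (le_of_add_le_right hm)
    obtain ⟨F, hF⟩ := hf m (Nat.le_of_add_le_add_right hm)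
    refine ⟨F * X i.succ, ?_⟩
    rw [IsHomogenization, map_mul, hF, map_mul, aeval_X, rename_X, homogeneousCoords,
      Fin.cons_succ]
    ring

lemma IsHomogenization.aeval_homogeneousCoords {m : ℕ} {f : MvPolynomial (Fin n) R}
    {F : MvPolynomial (Fin (n + 1)) R} (h : IsHomogenization m f F) {A : Type*} [CommSemiring A]
    [Algebra R A] (v : A) (x : Fin n → A) :
    aeval (homogeneousCoords v x) F = v ^ m * aeval x f := by
  have hcoords : (fun j => aeval (R := R) (Fin.cons v x : Fin (n + 1) → A)
      (homogeneousCoords (X 0) (fun i => X i.succ) j)) = homogeneousCoords v x := by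
    funext j
    cases j using Fin.cases <;> simp [homogeneousCoords]
  have hx : (Fin.cons v x : Fin (n + 1) → A) ∘ Fin.succ = x := rfl
  have hF := congrArg (aeval (Fin.cons v x : Fin (n + 1) → A)) h
  rwa [← AlgHom.comp_apply, comp_aeval, hcoords, map_mul, map_pow, aeval_X, aeval_rename, hx,
    Fin.cons_zero] at hF

end Polynomials

lemma IsHomogenization.eval_eq {m : ℕ} {f : MvPolynomial (Fin n) ℝ}
    {F : MvPolynomial (Fin (n + 1)) ℝ} (h : IsHomogenization m f F) {y : Fin (n + 1) → ℝ}
    (hy : y 0 ≠ 0) : eval y F = y 0 ^ m * eval (dehomogenize y) f := by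
  simpa [homogeneousCoords_dehomogenize hy, aeval_eq_eval] using
    h.aeval_homogeneousCoords (y 0) (dehomogenize y)

variable {E : Type*} [CommRing E] [Algebra ℝ E]

lemma IsHomogenization.aeval_homogeneousCoords_algHom {m : ℕ} {f : MvPolynomial (Fin n) ℝ}
    {F : MvPolynomial (Fin (n + 1)) ℝ} (h : IsHomogenization m f F) (v : E)
    (φ : MvPolynomial (Fin n) ℝ →ₐ[ℝ] E) :
    aeval (homogeneousCoords v (φ ∘ X)) F = v ^ m * φ f := by
  rw [h.aeval_homogeneousCoords, ← aeval_unique]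

section BoundedCoords
variable {T : Subsemiring E} (hT : ∀ a, a * a ∈ T) {φ : MvPolynomial (Fin n) ℝ →ₐ[ℝ] E}
  {p : MvPolynomial (Fin n) ℝ} {v : E}
include hT

/-- With `v = 1 / p`, the two assumptions say that `v² ≤ 2 v` and `∑ (Xᵢ v)² ≤ k v`. -/
lemma homogeneousCoords_mem_boundedSubalgebra {k : ℝ} (hp : φ (2 * p - 1) ∈ T)
    (hk : φ (C k * p - ∑ i, X i * X i) ∈ T) (hv : v * φ p = 1) (j : Fin (n + 1)) :
    homogeneousCoords v (φ ∘ X) j ∈ boundedSubalgebra T hT := by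
  have hvB : v ∈ boundedSubalgebra T hT := by
    refine mem_boundedSubalgebra_of_mul_self_le hT (c := 2) ?_
    convert mul_mem hp (hT v) using 1
    simp only [map_sub, map_mul, map_ofNat, map_one]
    linear_combination -2 * v * hv
  cases j using Fin.cases with
  | zero => exact hvB
  | succ i =>
    have hsum : ∑ i, (φ (X i) * v) * (φ (X i) * v) ∈ boundedSubalgebra T hT := by
      refine mem_boundedSubalgebra_of_sub_mem hT (sum_mem fun i _ => hT _) ?_
        (mul_mem (Subalgebra.algebraMap_mem _ k) hvB)
      convert mul_mem hk (hT v) using 1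
      simp only [mul_mul_mul_comm _ v, ← Finset.sum_mul, map_sub, map_mul, map_sum,
        ← algebraMap_eq, AlgHom.commutes]
      linear_combination -algebraMap ℝ E k * v * hv
    exact mem_boundedSubalgebra_of_sum_mul_self_mem hT hsum i

lemma exists_homogeneousCoords_mem_boundedSubalgebra {T' : Subsemiring E}
    (hT' : ∀ a, a * a ∈ T') {e : MvPolynomial (Fin n) ℝ} (he : φ e - 1 ∈ T)
    (heT : ∀ a ∈ T', φ e * a ∈ T)
    (hv : ∀ j, homogeneousCoords v (φ ∘ X) j ∈ boundedSubalgebra T' hT') :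
    ∃ N, ∀ j, homogeneousCoords (v ^ (N + 1)) (φ ∘ X) j ∈ boundedSubalgebra T hT := by
  obtain ⟨N, hN⟩ := exists_isHomogenization e
  obtain ⟨F, hF⟩ := hN (N + N) (Nat.le_add_left N N)
  have hw : φ e * (v ^ N * v ^ N) ∈ boundedSubalgebra T' hT' := by
    rw [← pow_add, mul_comm, ← hF.aeval_homogeneousCoords_algHom]
    exact eval₂_mem (fun _ _ => Subalgebra.algebraMap_mem _ _) hv
  refine ⟨N, fun j => ?_⟩
  rw [pow_succ', homogeneousCoords_mul]
  exact mul_mem_boundedSubalgebra_of_forall_mul_mem hT hT' he heT hw (hv j)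

omit [Algebra ℝ E] in
lemma one_add_mul_mem_of_mem_adjoinCone {h s t a : E} (hs : s ∈ T) (ht : t ∈ T)
    (hst : s * h = 1 + t) (ha : a ∈ adjoinCone T h (hT h)) : (1 + t) * a ∈ T := by
  obtain ⟨x, hx, y, hy, rfl⟩ := ha
  convert add_mem (mul_mem (add_mem (one_mem _) ht) hx) (mul_mem (mul_mem hs (hT h)) hy) using 1
  linear_combination -h * y * hst

/-- The Positivstellensatz provides multipliers `e` that clear the two positive polynomials
`2 p - 1` and `(k + 1) p - |X|²`. Modulo the preordering generated by `T` and these polynomials the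
homogeneous coordinates are bounded, and a power of `1 / p` makes up for `e`. -/
theorem exists_homogeneousCoords_pow_mem_boundedSubalgebra {G : Set (MvPolynomial (Fin n) ℝ)}
    (hG : G.Finite) (hGT : ∀ g ∈ G, φ g ∈ T) {k : ℝ}
    (hp : ∀ x, (∀ g ∈ G, 0 ≤ eval x g) → 1 ≤ eval x p)
    (hk : ∀ x, (∀ g ∈ G, 0 ≤ eval x g) → ∑ i, x i ^ 2 ≤ k * eval x p) (hv : v * φ p = 1) :
    ∃ N, ∀ j, homogeneousCoords (v ^ (N + 1)) (φ ∘ X) j ∈ boundedSubalgebra T hT := by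
  let h := 2 * p - 1
  let h' := C (k + 1) * p - ∑ i, X i * X i
  have hTφ (f) : f * f ∈ T.comap (φ : MvPolynomial (Fin n) ℝ →+* E) := by
    rw [Subsemiring.mem_comap, map_mul]
    exact hT _
  obtain ⟨s, hs, t, ht, hst⟩ := exists_mul_eq_one_add hTφ hG hGT (h := h) fun x hx => by
    simp only [h, map_sub, map_mul, map_ofNat, map_one]
    linarith [hp x hx]
  obtain ⟨s', hs', t', ht', hst'⟩ := exists_mul_eq_one_add hTφ hG hGT (h := h') fun x hx => by
    simp only [h', map_sub, map_mul, eval_C, map_sum, map_pow, eval_X, ← sq]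
    linarith [hp x hx, hk x hx]
  simp only [Subsemiring.mem_comap, RingHom.coe_coe] at hs ht hs' ht'
  have hφst : φ s * φ h = 1 + φ t := by rw [← map_mul, hst, map_add, map_one]
  have hφst' : φ s' * φ h' = 1 + φ t' := by rw [← map_mul, hst', map_add, map_one]
  let S := adjoinCone T (φ h) (hT _)
  have hTS : T ≤ S := le_adjoinCone _
  have hS (a) : a * a ∈ S := hTS (hT a)
  let T' := adjoinCone S (φ h') (hS _)
  have hST' : S ≤ T' := le_adjoinCone _
  have hT' (a) : a * a ∈ T' := hST' (hS a)
  refine exists_homogeneousCoords_mem_boundedSubalgebra hT hT' (e := (1 + t) * (1 + t')) ?_ ?_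
    (homogeneousCoords_mem_boundedSubalgebra hT' (hST' (mem_adjoinCone_self _))
      (mem_adjoinCone_self _) hv)
  · convert add_mem (add_mem ht ht') (mul_mem ht ht') using 1
    simp only [map_mul, map_add, map_one]
    ring
  · intro a ha
    simp only [map_mul, map_add, map_one, mul_assoc]
    exact one_add_mul_mem_of_mem_adjoinCone hT hs ht hφst
      (one_add_mul_mem_of_mem_adjoinCone hS (hTS hs') (hTS ht') hφst' ha)

end BoundedCoords

end Homogeneous

/-! ### Archimedean preorderings -/

section Archimedean

section Algebra
variable {E : Type*} [CommRing E] [Algebra ℝ E] {T : Subsemiring E} (hT : ∀ a, a * a ∈ T)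
include hT

lemma exists_pos_algebraMap_sub_mem {a : E} (ha : a ∈ boundedSubalgebra T hT) :
    ∃ r > 0, algebraMap ℝ E r - a ∈ T := by
  obtain ⟨c, hc, -⟩ := ha
  refine ⟨max c 1, by positivity, ?_⟩
  convert add_mem hc (algebraMap_mem_of_nonneg hT (sub_nonneg.2 (le_max_left c 1))) using 1
  rw [map_sub]; ring

/-- `(r - s) (a + ρ) + t + ρ s = r (a + ρ) - 1`. -/
lemma add_algebraMap_sub_inv_mem {a s t : E} (hs : s ∈ T) (ht : t ∈ T) (hst : s * a = 1 + t)
    {r : ℝ} (hr : 0 < r) (hrs : algebraMap ℝ E r - s ∈ T) {ρ : ℝ} (hρ : 0 ≤ ρ)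
    (ha : a + algebraMap ℝ E ρ ∈ T) : a + algebraMap ℝ E (ρ - r⁻¹) ∈ T := by
  have hsum := add_mem (add_mem (mul_mem hrs ha) ht) (mul_mem (algebraMap_mem_of_nonneg hT hρ) hs)
  convert mul_mem (algebraMap_mem_of_nonneg hT (inv_pos.2 hr).le) hsum using 1
  have hinv : algebraMap ℝ E r⁻¹ * algebraMap ℝ E r = 1 := by
    rw [← map_mul, inv_mul_cancel₀ hr.ne', map_one]
  rw [map_sub]
  linear_combination (-a - algebraMap ℝ E ρ) * hinv + algebraMap ℝ E r⁻¹ * hst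

lemma mem_of_add_algebraMap_mem_of_nonpos {a : E} {ρ : ℝ} (hρ : ρ ≤ 0)
    (ha : a + algebraMap ℝ E ρ ∈ T) : a ∈ T := by
  simpa [add_assoc, ← map_add] using
    add_mem ha (algebraMap_mem_of_nonneg hT (neg_nonneg.2 hρ))

lemma mem_of_mul_eq_one_add {a s t : E} (hs : s ∈ T) (ht : t ∈ T) (hst : s * a = 1 + t)
    (hsB : s ∈ boundedSubalgebra T hT) (haB : a ∈ boundedSubalgebra T hT) : a ∈ T := by
  obtain ⟨r, hr, hrs⟩ := exists_pos_algebraMap_sub_mem hT hsB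
  obtain ⟨c, -, hc⟩ := haB
  have hdescent (k : ℕ) : ∀ ρ ≤ k * r⁻¹, a + algebraMap ℝ E ρ ∈ T → a ∈ T := by
    induction k with
    | zero => exact fun ρ hρ => mem_of_add_algebraMap_mem_of_nonpos hT (by simpa using hρ)
    | succ k ih =>
      intro ρ hρ ha
      obtain hρ0 | hρ0 := le_total ρ 0
      · exact mem_of_add_algebraMap_mem_of_nonpos hT hρ0 ha
      · refine ih (ρ - r⁻¹) ?_ (add_algebraMap_sub_inv_mem hT hs ht hst hr hrs hρ0 ha)
        push_cast at hρ
        linarith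
  obtain ⟨k, hk⟩ := exists_nat_ge (c / r⁻¹)
  exact hdescent k c ((div_le_iff₀ (inv_pos.2 hr)).1 hk) (by rwa [add_comm])

end Algebra

/-- Schmüdgen's Positivstellensatz, deduced from the general one. -/
theorem mem_of_forall_eval_pos {n : ℕ} {T : Subsemiring (MvPolynomial (Fin n) ℝ)}
    (hT : ∀ f, f * f ∈ T) {G : Set (MvPolynomial (Fin n) ℝ)} (hG : G.Finite) (hGT : G ⊆ T)
    (hX : ∀ j, X j ∈ boundedSubalgebra T hT) {F : MvPolynomial (Fin n) ℝ}
    (hF : ∀ x, (∀ g ∈ G, 0 ≤ eval x g) → 0 < eval x F) : F ∈ T := by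
  have htop : boundedSubalgebra T hT = ⊤ := by
    rw [← top_le_iff, ← adjoin_range_X, Algebra.adjoin_le_iff]
    exact Set.range_subset_iff.2 hX
  obtain ⟨s, hs, t, ht, hst⟩ := exists_mul_eq_one_add hT hG hGT hF
  exact mem_of_mul_eq_one_add hT hs ht hst (htop ▸ Algebra.mem_top) (htop ▸ Algebra.mem_top)

theorem aeval_mem_of_forall_eval_pos {N : ℕ} {E : Type*} [CommRing E] [Algebra ℝ E]
    {T : Subsemiring E} (hT : ∀ a, a * a ∈ T) {b : Fin N → E} {c : Fin N → ℝ}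
    (hb : ∀ j, algebraMap ℝ E (c j) - b j ∈ T ∧ algebraMap ℝ E (c j) + b j ∈ T)
    {F : MvPolynomial (Fin N) ℝ} (hF : ∀ y ∈ Set.Icc (-c) c, 0 < eval y F) : aeval b F ∈ T := by
  let T' := T.comap (aeval b : MvPolynomial (Fin N) ℝ →ₐ[ℝ] E).toRingHom
  have hT' (f) : f * f ∈ T' := by
    rw [Subsemiring.mem_comap, map_mul]
    exact hT _
  have hX (j) : C (c j) - X j ∈ T' ∧ C (c j) + X j ∈ T' := by
    simpa [T', Subsemiring.mem_comap, algebraMap_eq] using hb j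
  refine mem_of_forall_eval_pos hT'
    (G := Set.range (fun j => C (c j) - X j) ∪ Set.range (fun j => C (c j) + X j))
    ((Set.finite_range _).union (Set.finite_range _))
    (Set.union_subset (Set.range_subset_iff.2 fun j => (hX j).1)
      (Set.range_subset_iff.2 fun j => (hX j).2))
    (fun j => ⟨c j, hX j⟩) fun y hy => hF y ⟨fun j => ?_, fun j => ?_⟩
  · simpa [← neg_le_iff_add_nonneg'] using hy _ (.inr ⟨j, rfl⟩)
  · simpa using hy _ (.inl ⟨j, rfl⟩)

end Archimedean

/-! ### Measures on compact sets -/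

section Measures

section Extension
variable {X : Type*} [TopologicalSpace X] {V : Type*} [AddCommGroup V] [Module ℝ V]
  {e : V →ₗ[ℝ] C(X, ℝ)} {Λ : V →ₗ[ℝ] ℝ}

lemma nonneg_of_forall_pos_imp_nonneg (he : 1 ∈ LinearMap.range e)
    (hΛ : ∀ v, (∀ x, 0 < e v x) → 0 ≤ Λ v) (v : V) (hv : 0 ≤ e v) : 0 ≤ Λ v := by
  obtain ⟨u, hu⟩ := he
  have hlim : Filter.Tendsto (fun ε : ℝ => Λ v + ε * Λ u) (nhdsWithin 0 (Set.Ioi 0))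
      (nhds (Λ v)) := by
    have hcont : Continuous fun ε : ℝ => Λ v + ε * Λ u := by fun_prop
    simpa using (hcont.tendsto 0).mono_left nhdsWithin_le_nhds
  refine ge_of_tendsto hlim (Filter.eventually_of_mem self_mem_nhdsWithin fun ε hε => ?_)
  rw [← smul_eq_mul, ← map_smul, ← map_add]
  refine hΛ _ fun x => ?_
  have hεx : (ε • (1 : C(X, ℝ))) x = ε := by simp
  rw [map_add, map_smul, hu, ContinuousMap.add_apply, hεx]
  exact add_pos_of_nonneg_of_pos (hv x) hε

variable [CompactSpace X]

/-- The M. Riesz extension theorem is applied to `V × C(X, ℝ)`, so that `e` need not be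
injective. -/
lemma exists_positiveLinearMap_comp_eq (he : 1 ∈ LinearMap.range e)
    (hΛ : ∀ v, 0 ≤ e v → 0 ≤ Λ v) : ∃ Φ : C(X, ℝ) →ₚ[ℝ] ℝ, ∀ v, Φ (e v) = Λ v := by
  obtain ⟨u, hu⟩ := he
  let s : PointedCone ℝ (V × C(X, ℝ)) :=
    (PointedCone.positive ℝ C(X, ℝ)).comap (e.coprod LinearMap.id)
  have hs (v : V) (f : C(X, ℝ)) : (v, f) ∈ s ↔ 0 ≤ e v + f := by
    simp [s]
  obtain ⟨Ψ, hΨ, hΨs⟩ := riesz_extension s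
    ⟨LinearMap.range (LinearMap.inl ℝ V C(X, ℝ)),
      Λ ∘ₗ LinearMap.fst ℝ V C(X, ℝ) ∘ₗ Submodule.subtype _⟩ (by
      rintro ⟨_, v, rfl⟩ hv
      exact hΛ v (by simpa using (hs v 0).1 hv)) (by
      rintro ⟨v, f⟩
      refine ⟨⟨_, ‖f‖ • u - v, rfl⟩, (hs _ _).2 fun x => ?_⟩
      have hf := neg_le_of_abs_le (f.norm_coe_le_norm x)
      simpa [hu] using neg_le_iff_add_nonneg'.1 hf)
  have hΨΛ (v : V) : Ψ (v, 0) = Λ v := hΨ ⟨_, v, rfl⟩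
  refine ⟨PositiveLinearMap.mk₀ (Ψ ∘ₗ LinearMap.inr ℝ V C(X, ℝ)) fun f hf =>
    hΨs _ ((hs 0 f).2 (by simpa using hf)), fun v => ?_⟩
  have hle := hΨs (v, -e v) ((hs _ _).2 (by simp))
  have hge := hΨs (-v, e v) ((hs _ _).2 (by simp))
  have hpos : Ψ (v, -e v) = Λ v - Ψ (0, e v) := by rw [← hΨΛ, ← map_sub]; simp
  have hneg : Ψ (-v, e v) = Ψ (0, e v) - Λ v := by rw [← hΨΛ, ← map_sub]; simp
  change Ψ (0, e v) = Λ v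
  linarith

theorem exists_measure_integral_eq [T2Space X] [MeasurableSpace X] [BorelSpace X]
    (he : 1 ∈ LinearMap.range e) (hΛ : ∀ v, (∀ x, 0 < e v x) → 0 ≤ Λ v) :
    ∃ ν : Measure X, IsFiniteMeasure ν ∧ ∀ v, ∫ x, e v x ∂ν = Λ v := by
  obtain ⟨Φ, hΦ⟩ := exists_positiveLinearMap_comp_eq he (nonneg_of_forall_pos_imp_nonneg he hΛ)
  let Ψ : CompactlySupportedContinuousMap X ℝ →ₚ[ℝ] ℝ :=
    PositiveLinearMap.mk₀
      { toFun := fun f => Φ (f : C(X, ℝ))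
        map_add' := fun f g => map_add Φ (f : C(X, ℝ)) g
        map_smul' := fun a f => map_smul Φ a (f : C(X, ℝ)) }
      fun f hf => map_nonneg Φ fun x => hf x
  refine ⟨RealRMK.rieszMeasure Ψ, inferInstance, fun v => ?_⟩
  rw [← hΦ]
  exact RealRMK.integral_rieszMeasure Ψ (CompactlySupportedContinuousMap.continuousMapEquiv (e v))

end Extension

section CompactSpace
variable {X : Type*} [TopologicalSpace X] [CompactSpace X] [MeasurableSpace X] [BorelSpace X]

lemma integrable_of_continuous (ν : Measure X) [IsFiniteMeasure ν] {f : X → ℝ}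
    (hf : Continuous f) : Integrable f ν :=
  hf.integrable_of_hasCompactSupport (HasCompactSupport.of_compactSpace f)

lemma continuous_integral_continuousMap (ν : Measure X) [IsFiniteMeasure ν] :
    Continuous fun f : C(X, ℝ) => ∫ x, f x ∂ν := by
  convert continuous_integral.comp (ContinuousMap.toLp 1 ν ℝ : C(X, ℝ) →L[ℝ] Lp ℝ 1 ν).continuous
    using 2 with f
  exact (integral_congr_ae (ContinuousMap.coeFn_toLp ν f)).symm

end CompactSpace

section PolyMap
variable {σ : Type*} (K : Set (σ → ℝ))

/-- Restriction of polynomial functions to `K`. -/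
def polyMap : MvPolynomial σ ℝ →ₐ[ℝ] C(K, ℝ) :=
  aeval fun j => ⟨fun y => y.1 j, (continuous_apply j).comp continuous_subtype_val⟩

variable {K}

lemma polyMap_apply (F : MvPolynomial σ ℝ) (y : K) : polyMap K F y = eval y.1 F := by
  induction F using MvPolynomial.induction_on with
  | C a => simp [polyMap]
  | add f g hf hg => rw [map_add, map_add, ContinuousMap.add_apply, hf, hg]
  | mul_X f i hf => rw [map_mul, map_mul, ContinuousMap.mul_apply, hf]; simp [polyMap]

lemma denseRange_polyMap [CompactSpace K] : DenseRange (polyMap K) := by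
  have hsep : (polyMap K).range.SeparatesPoints := by
    intro x y hxy
    obtain ⟨j, hj⟩ := Function.ne_iff.1 (Subtype.coe_ne_coe.2 hxy)
    exact ⟨_, ⟨_, ⟨X j, rfl⟩, rfl⟩, by simpa [polyMap_apply] using hj⟩
  have htop := ContinuousMap.subalgebra_topologicalClosure_eq_top_of_separatesPoints _ hsep
  intro f
  have hf : f ∈ (polyMap K).range.topologicalClosure := htop ▸ Algebra.mem_top
  exact hf

lemma measure_ext_of_integral_eval_eq [Countable σ] [CompactSpace K] {ν₁ ν₂ : Measure K}
    [IsFiniteMeasure ν₁] [IsFiniteMeasure ν₂]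
    (h : ∀ F : MvPolynomial σ ℝ, ∫ y, eval y.1 F ∂ν₁ = ∫ y, eval y.1 F ∂ν₂) : ν₁ = ν₂ := by
  have heq : (fun f : C(K, ℝ) => ∫ y, f y ∂ν₁) = fun f => ∫ y, f y ∂ν₂ := by
    refine denseRange_polyMap.equalizer (continuous_integral_continuousMap ν₁)
      (continuous_integral_continuousMap ν₂) (funext fun F => ?_)
    simpa [polyMap_apply] using h F
  exact ext_of_forall_integral_eq_of_IsFiniteMeasure fun f => congrFun heq f.toContinuousMap

lemma ae_nonneg_of_forall_integral_nonneg [Countable σ] [CompactSpace K] {ν : Measure K}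
    [IsFiniteMeasure ν] {g : C(K, ℝ)}
    (hg : ∀ F : MvPolynomial σ ℝ, 0 ≤ ∫ y, eval y.1 F ^ 2 * g y ∂ν) : ∀ᵐ y ∂ν, 0 ≤ g y := by
  have hcont (f : C(K, ℝ)) : 0 ≤ ∫ y, f y ^ 2 * g y ∂ν := by
    refine isClosed_property (p := fun f : C(K, ℝ) => 0 ≤ ∫ y, f y ^ 2 * g y ∂ν)
      denseRange_polyMap (isClosed_le continuous_const ?_) (fun F => ?_) f
    · exact (continuous_integral_continuousMap ν).comp
        (by fun_prop : Continuous fun f : C(K, ℝ) => f ^ 2 * g)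
    · simpa [polyMap_apply] using hg F
  have hneg : ∫ y, max (-g y) 0 ^ 3 ∂ν = 0 := by
    refine le_antisymm ?_ (integral_nonneg fun y => by positivity)
    have h := hcont ⟨fun y => max (-g y) 0, by fun_prop⟩
    have hcube (y : K) : max (-g y) 0 ^ 2 * g y = -max (-g y) 0 ^ 3 := by
      obtain hy | hy := le_total (-g y) 0
      · simp [max_eq_right hy]
      · rw [max_eq_left hy]; ring
    simp only [ContinuousMap.coe_mk, hcube, integral_neg] at h
    linarith
  rw [integral_eq_zero_iff_of_nonneg (fun y => by positivity)
    (integrable_of_continuous ν (by fun_prop))] at hneg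
  filter_upwards [hneg] with y hy
  simpa using hy

end PolyMap

end Measures

/-! ### Representing measures on a cube -/

section Represents
variable {N : ℕ} {E : Type*} [CommRing E] [Algebra ℝ E] {K : Set (Fin N → ℝ)}

/-- `ν` represents the functional `F ↦ L (u² F(b))`. Here `u` ranges over the whole ring, while
only the coordinates `b` are bounded modulo the preordering. -/
structure Represents (L : E →ₗ[ℝ] ℝ) (b : Fin N → E) (u : E) (ν : Measure K) : Prop where
  isFiniteMeasure : IsFiniteMeasure ν
  integral_eq : ∀ F : MvPolynomial (Fin N) ℝ, ∫ y, eval y.1 F ∂ν = L (u * u * aeval b F)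

lemma exists_represents {T : Subsemiring E} (hT : ∀ a, a * a ∈ T) {L : E →ₗ[ℝ] ℝ}
    (hL : ∀ t ∈ T, 0 ≤ L t) {b : Fin N → E} {c : Fin N → ℝ}
    (hb : ∀ j, algebraMap ℝ E (c j) - b j ∈ T ∧ algebraMap ℝ E (c j) + b j ∈ T) (u : E) :
    ∃ ν : Measure (Set.Icc (-c) c), Represents L b u ν := by
  obtain ⟨ν, hν, hνL⟩ := exists_measure_integral_eq
    (e := (polyMap (Set.Icc (-c) c)).toLinearMap)
    (Λ := L ∘ₗ LinearMap.mulLeft ℝ (u * u) ∘ₗ (aeval b).toLinearMap) ⟨1, map_one (polyMap _)⟩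
    fun F hF => hL _ (mul_mem (hT u) (aeval_mem_of_forall_eval_pos hT hb fun y hy => by
        simpa [polyMap_apply] using hF ⟨y, hy⟩))
  exact ⟨ν, hν, fun F => by simpa [polyMap_apply, mul_assoc] using hνL F⟩

namespace Represents
variable {L : E →ₗ[ℝ] ℝ} {b : Fin N → E} {u v : E} {ν ν' ν'' : Measure K}

lemma ae_eval_nonneg [CompactSpace K] (h : Represents L b 1 ν) {G : MvPolynomial (Fin N) ℝ}
    (hG : ∀ a, 0 ≤ L (a * a * aeval b G)) : ∀ᵐ y : K ∂ν, 0 ≤ eval y.1 G := by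
  have := h.isFiniteMeasure
  have hnonneg := ae_nonneg_of_forall_integral_nonneg (ν := ν) (g := polyMap K G) fun F => by
    have hF := h.integral_eq (F ^ 2 * G)
    simp only [map_mul, map_pow, one_mul, sq (aeval b F)] at hF
    simpa only [polyMap_apply, hF] using hG _
  simpa only [polyMap_apply] using hnonneg

variable {P : MvPolynomial (Fin N) ℝ}

omit [CommRing E] [Algebra ℝ E] in
lemma measurable_ofReal_eval_sq :
    Measurable fun y : K => ENNReal.ofReal (eval y.1 P ^ 2) :=
  ENNReal.measurable_ofReal.comp
    (((continuous_eval P).comp continuous_subtype_val).pow 2).measurable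

lemma eq_withDensity [CompactSpace K] (h : Represents L b v ν) (h' : Represents L b (v * u) ν')
    (hP : u * aeval b P = 1) :
    ν = ν'.withDensity fun y => ENNReal.ofReal (eval y.1 P ^ 2) := by
  have := h.isFiniteMeasure
  have := h'.isFiniteMeasure
  have hcont : Continuous fun y : K => eval y.1 P ^ 2 :=
    ((continuous_eval P).comp continuous_subtype_val).pow 2
  have : IsFiniteMeasure (ν'.withDensity fun y => ENNReal.ofReal (eval y.1 P ^ 2)) :=
    isFiniteMeasure_withDensity_ofReal (integrable_of_continuous ν' hcont).2
  refine measure_ext_of_integral_eval_eq fun F => ?_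
  rw [integral_withDensity_eq_integral_toReal_smul measurable_ofReal_eval_sq
    (Filter.Eventually.of_forall fun y => ENNReal.ofReal_lt_top)]
  simp only [ENNReal.toReal_ofReal (sq_nonneg _)]
  simp only [smul_eq_mul, ← map_pow, ← map_mul]
  rw [h.integral_eq, h'.integral_eq, map_mul (aeval b), map_pow (aeval b)]
  congr 1
  linear_combination (-v * v * aeval b F * (u * aeval b P + 1)) * hP

lemma ae_eval_ne_zero [CompactSpace K] (h : Represents L b v ν) (h' : Represents L b (v * u) ν')
    (hP : u * aeval b P = 1) : ∀ᵐ y : K ∂ν, eval y.1 P ≠ 0 := by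
  rw [h.eq_withDensity h' hP, ae_withDensity_iff measurable_ofReal_eval_sq]
  refine Filter.Eventually.of_forall fun y hy hPy => hy ?_
  simp [hPy]

/-- The measure `ν''` serves to show that `P ≠ 0` holds `ν'`-almost everywhere. -/
lemma integral_div [CompactSpace K] (h : Represents L b v ν) (h' : Represents L b (v * u) ν')
    (h'' : Represents L b (v * u * u) ν'') (hP : u * aeval b P = 1)
    (F : MvPolynomial (Fin N) ℝ) :
    Integrable (fun y : K => eval y.1 F / eval y.1 P ^ 2) ν ∧
      ∫ y : K, eval y.1 F / eval y.1 P ^ 2 ∂ν = L (v * u * (v * u) * aeval b F) := by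
  have := h'.isFiniteMeasure
  have hfin : ∀ᵐ y : K ∂ν', ENNReal.ofReal (eval y.1 P ^ 2) < ⊤ :=
    Filter.Eventually.of_forall fun y => ENNReal.ofReal_lt_top
  have hae : (fun y : K => (ENNReal.ofReal (eval y.1 P ^ 2)).toReal •
      (eval y.1 F / eval y.1 P ^ 2)) =ᵐ[ν'] fun y => eval y.1 F := by
    filter_upwards [h'.ae_eval_ne_zero h'' hP] with y hy
    rw [ENNReal.toReal_ofReal (sq_nonneg _), smul_eq_mul, mul_div_cancel₀ _ (pow_ne_zero 2 hy)]
  have hF : Continuous fun y : K => eval y.1 F :=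
    (continuous_eval F).comp continuous_subtype_val
  rw [h.eq_withDensity h' hP,
    integrable_withDensity_iff_integrable_smul' measurable_ofReal_eval_sq hfin,
    integral_withDensity_eq_integral_toReal_smul measurable_ofReal_eval_sq hfin,
    integrable_congr hae, integral_congr_ae hae]
  exact ⟨integrable_of_continuous ν' hF, h'.integral_eq F⟩

end Represents

end Represents

/-! ### The moment measure -/

section MomentMeasure
variable {n : ℕ} {E : Type*} [CommRing E] [Algebra ℝ E] {L : E →ₗ[ℝ] ℝ}
  {φ : MvPolynomial (Fin n) ℝ →ₐ[ℝ] E}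

section Chart
variable {K : Set (Fin (n + 1) → ℝ)} [CompactSpace K] {ν : Measure K} {β : E}
  {w : MvPolynomial (Fin n) ℝ}

lemma ae_eval_dehomogenize_nonneg (hν : Represents L (homogeneousCoords β (φ ∘ X)) 1 ν)
    (hy₀ : ∀ᵐ y : K ∂ν, y.1 0 ≠ 0) {g : MvPolynomial (Fin n) ℝ}
    (hg : ∀ a, 0 ≤ L (a * a * φ g)) : ∀ᵐ y : K ∂ν, 0 ≤ eval (dehomogenize y.1) g := by
  obtain ⟨j, hj⟩ := exists_isHomogenization g
  obtain ⟨G, hG⟩ := hj (j + j) (Nat.le_add_left j j)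
  have hnonneg := hν.ae_eval_nonneg (G := G) fun a => by
    rw [hG.aeval_homogeneousCoords_algHom, pow_add, ← mul_assoc, mul_mul_mul_comm]
    exact hg _
  filter_upwards [hnonneg, hy₀] with y hy hy₀
  rw [hG.eval_eq hy₀, pow_add] at hy
  exact nonneg_of_mul_nonneg_right hy (mul_self_pos.2 (pow_ne_zero j hy₀))

lemma mul_aeval_homogeneousCoords_eq_one (hβ : β * φ w = 1) {d : MvPolynomial (Fin n) ℝ} {u : E}
    (hd : u * φ d = 1) {j : ℕ} {P : MvPolynomial (Fin (n + 1)) ℝ}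
    (hP : IsHomogenization j d P) :
    u * φ w ^ j * aeval (homogeneousCoords β (φ ∘ X)) P = 1 := by
  have hβj : β ^ j * φ w ^ j = 1 := by rw [← mul_pow, hβ, one_pow]
  rw [hP.aeval_homogeneousCoords_algHom]
  linear_combination β ^ j * φ w ^ j * hd + hβj

variable (hβ : β * φ w = 1)
  (hrep : ∀ u, ∃ ν' : Measure K, Represents L (homogeneousCoords β (φ ∘ X)) u ν')
  (hν : Represents L (homogeneousCoords β (φ ∘ X)) 1 ν)
include hβ hrep hν

lemma ae_coord_zero_ne_zero : ∀ᵐ y : K ∂ν, y.1 0 ≠ 0 := by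
  obtain ⟨ν', hν'⟩ := hrep (1 * φ w)
  simpa using hν.ae_eval_ne_zero hν' (P := X 0)
    (by rw [aeval_X, mul_comm]; exact hβ)

lemma ae_eval_dehomogenize_ne_zero {d : MvPolynomial (Fin n) ℝ} {u : E} (hd : u * φ d = 1) :
    ∀ᵐ y : K ∂ν, eval (dehomogenize y.1) d ≠ 0 := by
  obtain ⟨j, hj⟩ := exists_isHomogenization d
  obtain ⟨P, hP⟩ := hj j le_rfl
  obtain ⟨ν', hν'⟩ := hrep (1 * (u * φ w ^ j))
  have hinv := mul_aeval_homogeneousCoords_eq_one hβ hd hP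
  filter_upwards [hν.ae_eval_ne_zero hν' hinv, ae_coord_zero_ne_zero hβ hrep hν] with y hy hy₀
  rw [hP.eval_eq hy₀] at hy
  exact right_ne_zero_of_mul hy

/-- With homogenizations `P` of `d` in degree `j` and `F` of `f d` in degree `2 j`, the quotient
`f / d` becomes `F / P²`. -/
lemma integral_eval_dehomogenize_div {d : MvPolynomial (Fin n) ℝ} {u : E} (hd : u * φ d = 1)
    (f : MvPolynomial (Fin n) ℝ) :
    Integrable (fun y : K => eval (dehomogenize y.1) f / eval (dehomogenize y.1) d) ν ∧
      ∫ y : K, eval (dehomogenize y.1) f / eval (dehomogenize y.1) d ∂ν = L (u * φ f) := by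
  obtain ⟨j₁, hj₁⟩ := exists_isHomogenization d
  obtain ⟨j₂, hj₂⟩ := exists_isHomogenization (f * d)
  obtain ⟨j, hle₁, hle₂⟩ : ∃ j, j₁ ≤ j ∧ j₂ ≤ j + j :=
    ⟨max j₁ j₂, le_max_left _ _, (le_max_right j₁ j₂).trans (Nat.le_add_left _ _)⟩
  obtain ⟨P, hP⟩ := hj₁ j hle₁
  obtain ⟨F, hF⟩ := hj₂ (j + j) hle₂
  have hβj : β ^ j * φ w ^ j = 1 := by rw [← mul_pow, hβ, one_pow]
  have hinv := mul_aeval_homogeneousCoords_eq_one hβ hd hP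
  have hval : 1 * (u * φ w ^ j) * (1 * (u * φ w ^ j)) *
      aeval (homogeneousCoords β (φ ∘ X)) F = u * φ f := by
    rw [hF.aeval_homogeneousCoords_algHom, map_mul]
    linear_combination u * φ f * (β ^ j * φ w ^ j) ^ 2 * hd +
      u * φ f * (β ^ j * φ w ^ j + 1) * hβj
  obtain ⟨ν', hν'⟩ := hrep (1 * (u * φ w ^ j))
  obtain ⟨ν'', hν''⟩ := hrep (1 * (u * φ w ^ j) * (u * φ w ^ j))
  have hae : (fun y : K => eval y.1 F / eval y.1 P ^ 2) =ᵐ[ν]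
      fun y => eval (dehomogenize y.1) f / eval (dehomogenize y.1) d := by
    filter_upwards [ae_coord_zero_ne_zero hβ hrep hν,
      ae_eval_dehomogenize_ne_zero hβ hrep hν hd] with y hy₀ hdy
    rw [hF.eval_eq hy₀, hP.eval_eq hy₀, map_mul]
    field_simp
    ring
  obtain ⟨hint, hL⟩ := hν.integral_div hν' hν'' hinv F
  exact ⟨hint.congr hae, by rw [← integral_congr_ae hae, hL, hval]⟩

end Chart

theorem exists_measure_forall_integral_div {T : Subsemiring E} (hT : ∀ a, a * a ∈ T)
    (hL : ∀ t ∈ T, 0 ≤ L t) {G : Set (MvPolynomial (Fin n) ℝ)} (hG : G.Finite)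
    (hGT : ∀ g ∈ G, φ g ∈ T) {p : MvPolynomial (Fin n) ℝ} {k : ℝ}
    (hp : ∀ x, (∀ g ∈ G, 0 ≤ eval x g) → 1 ≤ eval x p)
    (hk : ∀ x, (∀ g ∈ G, 0 ≤ eval x g) → ∑ i, x i ^ 2 ≤ k * eval x p)
    {v : E} (hv : v * φ p = 1) :
    ∃ μ : Measure (Fin n → ℝ), IsFiniteMeasure μ ∧ (∀ g ∈ G, ∀ᵐ x ∂μ, 0 ≤ eval x g) ∧
      ∀ d u, u * φ d = 1 → (∀ᵐ x ∂μ, eval x d ≠ 0) ∧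
        ∀ f, Integrable (fun x => eval x f / eval x d) μ ∧
          ∫ x, eval x f / eval x d ∂μ = L (u * φ f) := by
  obtain ⟨N, hN⟩ := exists_homogeneousCoords_pow_mem_boundedSubalgebra hT hG hGT hp hk hv
  choose c hc using hN
  have hβ : v ^ (N + 1) * φ (p ^ (N + 1)) = 1 := by rw [map_pow, ← mul_pow, hv, one_pow]
  have hrep := exists_represents hT hL hc
  obtain ⟨ν, hν⟩ := hrep 1
  have := hν.isFiniteMeasure
  have hπ : Measurable fun y : Set.Icc (-c) c => dehomogenize y.1 :=
    measurable_dehomogenize.comp measurable_subtype_coe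
  have hmeas (f : MvPolynomial (Fin n) ℝ) : Measurable fun x => eval x f :=
    (continuous_eval f).measurable
  refine ⟨ν.map fun y => dehomogenize y.1, inferInstance, fun g hg => ?_, fun d u hd =>
    ⟨?_, fun f => ?_⟩⟩
  · rw [ae_map_iff hπ.aemeasurable (measurableSet_le measurable_const (hmeas g))]
    exact ae_eval_dehomogenize_nonneg hν (ae_coord_zero_ne_zero hβ hrep hν) fun a =>
      hL _ (mul_mem (hT a) (hGT g hg))
  · exact (ae_map_iff hπ.aemeasurable (hmeas d (measurableSet_singleton 0)).compl).2
      (ae_eval_dehomogenize_ne_zero hβ hrep hν hd)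
  · have hfd : AEStronglyMeasurable (fun x => eval x f / eval x d)
        (ν.map fun y => dehomogenize y.1) :=
      ((hmeas f).div (hmeas d)).aestronglyMeasurable
    rw [integrable_map_measure hfd hπ.aemeasurable, integral_map hπ.aemeasurable hfd]
    exact integral_eval_dehomogenize_div hβ hrep hν hd f

end MomentMeasure

/-! ### The support of the moment measure -/

section Support
open Filter Topology Asymptotics

lemma exists_eventually_measure_closedBall_le {F : Type*} [SeminormedAddCommGroup F]
    [MeasurableSpace F] (μ : Measure F) [IsFiniteMeasure μ] {q : F → ℝ} {a : F}
    (hqa : q =O[𝓝 a] fun x => x - a) (hq : ∀ᵐ x ∂μ, q x ≠ 0) {N : ℕ}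
    (hint : Integrable (fun x => 1 / q x ^ N) μ) :
    ∃ A > 0, ∀ᶠ r in 𝓝[>] (0 : ℝ), μ (Metric.closedBall a r) ≤ ENNReal.ofReal (A * r ^ N) := by
  obtain ⟨C, hC, hbound⟩ := hqa.exists_pos
  obtain ⟨δ, hδ, hqδ⟩ := Metric.nhds_basis_closedBall.eventually_iff.1 hbound.bound
  have : 0 ≤ ∫ x, |1 / q x ^ N| ∂μ := integral_nonneg fun x => abs_nonneg _
  refine ⟨(∫ x, |1 / q x ^ N| ∂μ + 1) * C ^ N, by positivity, ?_⟩
  filter_upwards [Ioc_mem_nhdsGT hδ] with r ⟨hr, hrδ⟩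
  have hball : Metric.closedBall a r ≤ᵐ[μ] {x | 1 / (C * r) ^ N ≤ |1 / q x ^ N|} := by
    filter_upwards [hq] with x hx hxr
    have hqx : |q x| ≤ C * r := by
      refine (hqδ (Metric.closedBall_subset_closedBall hrδ hxr)).trans ?_
      gcongr
      exact mem_closedBall_iff_norm.1 hxr
    have : 0 < |q x| := abs_pos.2 hx
    change 1 / (C * r) ^ N ≤ |1 / q x ^ N|
    rw [abs_div, abs_one, abs_pow]
    gcongr
  have hmarkov := mul_meas_ge_le_integral_of_nonneg (Eventually.of_forall fun x => abs_nonneg _)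
    hint.abs (1 / (C * r) ^ N)
  rw [one_div_mul_eq_div, div_le_iff₀ (by positivity)] at hmarkov
  refine (measure_mono_ae hball).trans ?_
  rw [← ofReal_measureReal, mul_assoc, ← mul_pow]
  refine ENNReal.ofReal_le_ofReal (hmarkov.trans ?_)
  gcongr
  linarith

variable {n : ℕ} (μ : Measure (Fin n → ℝ)) [IsFiniteMeasure μ]

lemma tendsto_volume_div_measure_closedBall {q : (Fin n → ℝ) → ℝ} {a : Fin n → ℝ}
    (hqa : q =O[𝓝 a] fun x => x - a) (hq : ∀ᵐ x ∂μ, q x ≠ 0)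
    (hint : Integrable (fun x => 1 / q x ^ (n + 1)) μ) :
    Tendsto (fun r => volume (Metric.closedBall a r) / μ (Metric.closedBall a r)) (𝓝[>] 0)
      (𝓝 ⊤) := by
  obtain ⟨A, hA, hμ⟩ := exists_eventually_measure_closedBall_le μ hqa hq hint
  have hlim : Tendsto (fun r : ℝ => ENNReal.ofReal (A⁻¹ * r⁻¹)) (𝓝[>] 0) (𝓝 ⊤) :=
    ENNReal.tendsto_ofReal_nhds_top.2
      (tendsto_inv_nhdsGT_zero.const_mul_atTop (inv_pos.2 hA))
  refine tendsto_nhds_top_mono hlim ?_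
  filter_upwards [hμ, self_mem_nhdsWithin] with r hr (hr0 : 0 < r)
  rw [Real.volume_pi_closedBall a hr0.le, Fintype.card_fin]
  calc ENNReal.ofReal (A⁻¹ * r⁻¹)
      ≤ ENNReal.ofReal ((2 * r) ^ n / (A * r ^ (n + 1))) := by
        refine ENNReal.ofReal_le_ofReal ?_
        rw [← mul_inv, le_div_iff₀ (by positivity)]
        calc (A * r)⁻¹ * (A * r ^ (n + 1)) = r ^ n := by rw [pow_succ]; field_simp
          _ ≤ (2 * r) ^ n := by gcongr; linarith
    _ = ENNReal.ofReal ((2 * r) ^ n) / ENNReal.ofReal (A * r ^ (n + 1)) :=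
        ENNReal.ofReal_div_of_pos (by positivity)
    _ ≤ ENNReal.ofReal ((2 * r) ^ n) / μ (Metric.closedBall a r) := by gcongr

lemma ae_not_tendsto_volume_div_measure_closedBall :
    ∀ᵐ a ∂μ, ¬ Tendsto (fun r => volume (Metric.closedBall a r) / μ (Metric.closedBall a r))
      (𝓝[>] 0) (𝓝 ⊤) := by
  filter_upwards [Besicovitch.ae_tendsto_rnDeriv volume μ, Measure.rnDeriv_lt_top volume μ]
    with a ha hlt htop
  exact hlt.ne (tendsto_nhds_unique ha htop)

/-- As `D` may be uncountable, the null sets `Z(d)` cannot simply be united. Instead, a zero of some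
`d ∈ D` is a point where `μ` has infinite codensity, and these points form a null set. -/
theorem ae_mem_diff_iUnion_Zset {D : Submonoid (MvPolynomial (Fin n) ℝ)} {K : Set (Fin n → ℝ)}
    (hK : ∀ᵐ x ∂μ, x ∈ K) (hD : ∀ d ∈ D, ∀ᵐ x ∂μ, eval x d ≠ 0)
    (hint : ∀ d ∈ D, Integrable (fun x => 1 / eval x d) μ) :
    ∀ᵐ x ∂μ, x ∈ K \ ⋃ d ∈ (D : Set (MvPolynomial (Fin n) ℝ)), Zset d := by
  filter_upwards [hK, ae_not_tendsto_volume_div_measure_closedBall μ] with a haK ha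
  refine ⟨haK, fun hmem => ?_⟩
  obtain ⟨d, hd, hda : eval a d = 0⟩ := Set.mem_iUnion₂.1 hmem
  have hO : (fun x => eval x d) =O[𝓝 a] fun x => x - a := by
    simpa [hda] using
      (AnalyticOnNhd.eval_mvPolynomial d a trivial).differentiableAt.isBigO_sub
  exact ha (tendsto_volume_div_measure_closedBall μ hO (hD d hd)
    (by simpa using hint _ (pow_mem hd (n + 1))))

end Support

/-! ### The rational moment problem -/

lemma mk_one_mul_algebraMap {R : Type*} [CommRing R] {D : Submonoid R} (d : D) :
    Localization.mk 1 d * algebraMap R (Localization D) d = 1 := by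
  rw [Localization.mk_eq_mk', IsLocalization.mk'_spec, map_one]

/-- Solution of the rational moment problem: every linear functional
nonnegative on `T_S^E` is given by integration against a Borel measure supported on
`closure (K_S \ ⋃_{d ∈ D} Z(d))` which gives measure zero to every `Z(d)`, `d ∈ D`. -/
theorem rational_moment_problem
    {n m : ℕ} (D : Submonoid (MvPolynomial (Fin n) ℝ))
    (hD0 : (0 : MvPolynomial (Fin n) ℝ) ∉ D)
    (g : Fin m → MvPolynomial (Fin n) ℝ)
    (hKne : (KS g).Nonempty)
    (p : MvPolynomial (Fin n) ℝ) (hpD : p ∈ D)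
    (k : ℕ) (hk : 1 ≤ k)
    (hp1 : ∀ x ∈ KS g, 1 ≤ eval x p)
    (hpgrow : ∀ x ∈ KS g, ∑ i, (x i) ^ 2 ≤ (k : ℝ) * eval x p)
    (L : Localization D →ₗ[ℝ] ℝ)
    (hL : ∀ t ∈ genPreordering fun i =>
        algebraMap (MvPolynomial (Fin n) ℝ) (Localization D) (g i), 0 ≤ L t) :
    ∃ μ : Measure (Fin n → ℝ),
      μ (closure (KS g \ ⋃ d ∈ (D : Set (MvPolynomial (Fin n) ℝ)), Zset d))ᶜ = 0 ∧
      (∀ d ∈ D, μ (closure (KS g \ ⋃ d' ∈ (D : Set (MvPolynomial (Fin n) ℝ)), Zset d')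
          ∩ Zset d) = 0) ∧
      ∀ (f : MvPolynomial (Fin n) ℝ) (d : D),
        Integrable (fun x => eval x f / eval x (d : MvPolynomial (Fin n) ℝ)) μ ∧
        L (Localization.mk f d)
          = ∫ x in closure (KS g \ ⋃ d' ∈ (D : Set (MvPolynomial (Fin n) ℝ)), Zset d'),
              eval x f / eval x (d : MvPolynomial (Fin n) ℝ) ∂μ := by
  set h := fun i => algebraMap (MvPolynomial (Fin n) ℝ) (Localization D) (g i)
  have hKS (x) (hx : ∀ q ∈ Set.range g, 0 ≤ eval x q) : x ∈ KS g := fun i => hx _ ⟨i, rfl⟩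
  obtain ⟨μ, hμ, hK, hrep⟩ := exists_measure_forall_integral_div
    (φ := Algebra.algHom ℝ _ (Localization D)) (mul_self_mem_preorderingClosure h)
    (fun t ht => hL t (preorderingClosure_subset_genPreordering h ht)) (Set.finite_range g)
    (Set.forall_mem_range.2 (mem_preorderingClosure h)) (fun x hx => hp1 x (hKS x hx))
    (fun x hx => hpgrow x (hKS x hx)) (mk_one_mul_algebraMap ⟨p, hpD⟩)
  have hD (d : D) := hrep d _ (mk_one_mul_algebraMap d)
  have hsupp := (ae_mem_diff_iUnion_Zset μ (K := KS g) (ae_all_iff.2 fun i => hK _ ⟨i, rfl⟩)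
    (fun d hd => (hD ⟨d, hd⟩).1) fun d hd => by simpa using ((hD ⟨d, hd⟩).2 1).1).mono
      fun _ hx => subset_closure hx
  refine ⟨μ, hsupp, fun d hd => measure_mono_null Set.inter_subset_right ?_,
    fun f d => ⟨((hD d).2 f).1, ?_⟩⟩
  · simpa [ae_iff, Zset] using (hD ⟨d, hd⟩).1
  · rw [Measure.restrict_eq_self_of_ae_mem hsupp, ((hD d).2 f).2, Localization.mk_eq_mk',
      IsLocalization.mk'_eq_mul_mk'_one, mul_comm]
    rfl

end
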